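/- arXiv:1509.08069 — 10 statements merged into one kernel-verified Lean document; each statement's English description precedes it below -/
import Mathlib

section
/- If (a,b,c) ∈ ℂ³ satisfies the equations (E1): −(1/64)·(−4 + 3a⁴ + 8a³b + 8a²b² − 4a³c − 8a²bc)·(4 + 3a⁴ + 8a³b + 8a²b² − 4a³c − 8a²bc) = 0 and −(1/8)·a²·(a⁴ − 8a²b² − 16ab³ − 8b⁴ + 8a²bc + 24ab²c + 16b³c − 2a²c² − 8abc² − 8b²c²) = 0, then a is a root of the polynomial (X⁸ + 24X⁴ + 16)·(X⁸ − 24X⁴ + 16); more precisely, if 4 + 3a⁴ + 8a³b + 8a²b² − 4a³c − 8a²bc = 0 then a⁸ + 24a⁴ + 16 = 0, and if −4 + 3a⁴ + 8a³b + 8a²b² − 4a³c − 8a²bc = 0 then a⁸ − 24a⁴ + 16 = 0. -/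
/-!
With `q = 2b(a + b) - c(a + 2b)` one has `f₁ = 4 + 3a⁴ + 4a²q`, `f₂ = -4 + 3a⁴ + 4a²q` and
`g = a⁴ - 2q²`. Hence `a²g = 0` gives `(4a²q)² = 8a⁸`, and for every `k` the octic
`a⁸ + 6ka⁴ + k² = (k + 3a⁴)² - 8a⁸` is a difference of squares with factor `k + 3a⁴ + 4a²q`;
the two octics of the theorem are the cases `k = 4` and `k = -4`.
-/

section CommRing

variable {R : Type*} [CommRing R]

/-- The quadratic form `q` through which `b` and `c` enter the equations (E1):
`f₁ = 4 + 3a⁴ + 4a²q` and `g = a⁴ - 2q²`. -/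
def mixedForm (a b c : R) : R :=
  2 * b * (a + b) - c * (a + 2 * b)

theorem add_quartic_eq_add_mixedForm (k a b c : R) :
    k + 3 * a ^ 4 + 8 * a ^ 3 * b + 8 * a ^ 2 * b ^ 2 - 4 * a ^ 3 * c - 8 * a ^ 2 * b * c =
      k + 3 * a ^ 4 + 4 * a ^ 2 * mixedForm a b c := by
  rw [mixedForm]
  ring

theorem quartic_eq_sub_mixedForm_sq (a b c : R) :
    a ^ 4 - 8 * a ^ 2 * b ^ 2 - 16 * a * b ^ 3 - 8 * b ^ 4 + 8 * a ^ 2 * b * c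
      + 24 * a * b ^ 2 * c + 16 * b ^ 3 * c - 2 * a ^ 2 * c ^ 2 - 8 * a * b * c ^ 2
      - 8 * b ^ 2 * c ^ 2 =
    a ^ 4 - 2 * mixedForm a b c ^ 2 := by
  rw [mixedForm]
  ring

theorem octic_eq_mul_of_sq_mul_eq_zero {a q : R} (h : a ^ 2 * (a ^ 4 - 2 * q ^ 2) = 0) (k : R) :
    a ^ 8 + 6 * k * a ^ 4 + k ^ 2 =
      (k + 3 * a ^ 4 - 4 * a ^ 2 * q) * (k + 3 * a ^ 4 + 4 * a ^ 2 * q) := by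
  have sq_eq : (4 * a ^ 2 * q) ^ 2 = 8 * a ^ 8 := by linear_combination -8 * a ^ 2 * h
  calc
    a ^ 8 + 6 * k * a ^ 4 + k ^ 2 = (k + 3 * a ^ 4) ^ 2 - 8 * a ^ 8 := by ring
    _ = (k + 3 * a ^ 4) ^ 2 - (4 * a ^ 2 * q) ^ 2 := by rw [sq_eq]
    _ = (k + 3 * a ^ 4 - 4 * a ^ 2 * q) * (k + 3 * a ^ 4 + 4 * a ^ 2 * q) := by ring

theorem a_root_of_octics_general (a b c : R)
    (h1 : (-4 + 3 * a ^ 4 + 8 * a ^ 3 * b + 8 * a ^ 2 * b ^ 2 - 4 * a ^ 3 * c - 8 * a ^ 2 * b * c) *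
      (4 + 3 * a ^ 4 + 8 * a ^ 3 * b + 8 * a ^ 2 * b ^ 2 - 4 * a ^ 3 * c - 8 * a ^ 2 * b * c) = 0)
    (h2 : a ^ 2 * (a ^ 4 - 8 * a ^ 2 * b ^ 2 - 16 * a * b ^ 3 - 8 * b ^ 4 + 8 * a ^ 2 * b * c
      + 24 * a * b ^ 2 * c + 16 * b ^ 3 * c - 2 * a ^ 2 * c ^ 2 - 8 * a * b * c ^ 2
      - 8 * b ^ 2 * c ^ 2) = 0) :
    (a ^ 8 + 24 * a ^ 4 + 16) * (a ^ 8 - 24 * a ^ 4 + 16) = 0 ∧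
    (4 + 3 * a ^ 4 + 8 * a ^ 3 * b + 8 * a ^ 2 * b ^ 2 - 4 * a ^ 3 * c - 8 * a ^ 2 * b * c = 0 →
      a ^ 8 + 24 * a ^ 4 + 16 = 0) ∧
    (-4 + 3 * a ^ 4 + 8 * a ^ 3 * b + 8 * a ^ 2 * b ^ 2 - 4 * a ^ 3 * c - 8 * a ^ 2 * b * c = 0 →
      a ^ 8 - 24 * a ^ 4 + 16 = 0) := by
  simp only [add_quartic_eq_add_mixedForm] at h1 ⊢
  rw [quartic_eq_sub_mixedForm_sq] at h2
  set q := mixedForm a b c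
  have factor_plus : a ^ 8 + 24 * a ^ 4 + 16 =
      (4 + 3 * a ^ 4 - 4 * a ^ 2 * q) * (4 + 3 * a ^ 4 + 4 * a ^ 2 * q) := by
    rw [← octic_eq_mul_of_sq_mul_eq_zero h2]
    ring
  have factor_minus : a ^ 8 - 24 * a ^ 4 + 16 =
      (-4 + 3 * a ^ 4 - 4 * a ^ 2 * q) * (-4 + 3 * a ^ 4 + 4 * a ^ 2 * q) := by
    rw [← octic_eq_mul_of_sq_mul_eq_zero h2]
    ring
  refine ⟨?_, fun hf₁ ↦ by rw [factor_plus, hf₁, mul_zero],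
    fun hf₂ ↦ by rw [factor_minus, hf₂, mul_zero]⟩
  rw [factor_plus, factor_minus, mul_mul_mul_comm, mul_comm (4 + 3 * a ^ 4 + 4 * a ^ 2 * q), h1,
    mul_zero]

end CommRing

/-- If `(a,b,c) ∈ ℂ³` satisfies the equations (E1), then `a` is a root of
`(X⁸ + 24X⁴ + 16)(X⁸ − 24X⁴ + 16)`; more precisely, if `f₁ = 0` then
`a⁸ + 24a⁴ + 16 = 0`, and if `f₂ = 0` then `a⁸ − 24a⁴ + 16 = 0`. -/
theorem a_root_of_octics (a b c : ℂ)
    (h1 : -(1/64) * (-4 + 3*a^4 + 8*a^3*b + 8*a^2*b^2 - 4*a^3*c - 8*a^2*b*c) *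
      (4 + 3*a^4 + 8*a^3*b + 8*a^2*b^2 - 4*a^3*c - 8*a^2*b*c) = 0)
    (h2 : -(1/8) * a^2 * (a^4 - 8*a^2*b^2 - 16*a*b^3 - 8*b^4 + 8*a^2*b*c + 24*a*b^2*c
      + 16*b^3*c - 2*a^2*c^2 - 8*a*b*c^2 - 8*b^2*c^2) = 0) :
    (a^8 + 24*a^4 + 16) * (a^8 - 24*a^4 + 16) = 0 ∧
    (4 + 3*a^4 + 8*a^3*b + 8*a^2*b^2 - 4*a^3*c - 8*a^2*b*c = 0 → a^8 + 24*a^4 + 16 = 0) ∧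
    (-4 + 3*a^4 + 8*a^3*b + 8*a^2*b^2 - 4*a^3*c - 8*a^2*b*c = 0 → a^8 - 24*a^4 + 16 = 0) :=
  a_root_of_octics_general a b c (by linear_combination -64 * h1) (by linear_combination -8 * h2)
end

section
/- Let m = (−3 + 2√2)^{1/4} ∈ ℂ be a fixed fourth root of −3+2√2. Then ℚ(m) is a Galois extension of ℚ of degree 8 whose Galois group is isomorphic to the dihedral group D₈ of order 8. -/
open IntermediateField

/-!
Write `β = √(√2 - 1)`, a real root of `X⁴ + 2X² - 1`. Since `m⁴ = -β⁴`, the quotient `m / β` is a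
primitive eighth root of unity, and as `√2 = β² + 1 = (m⁴ + 3) / 2` this gives `ℚ(m) = ℚ(β, i)`.
That field is the splitting field of `X⁴ + 2X² - 1 = (X² - β²)(X² + β⁻²)`. The quartic is Eisenstein
at `2` after `X ↦ X + 1`, and `i` is not in the real field `ℚ(β)`, so the degree is `4 · 2 = 8`.
Hence the Galois group is a subgroup of order `8` of the symmetric group on the four roots,
that is, a Sylow `2`-subgroup, and so is the dihedral group acting on the vertices of a square.
-/

section Dihedral

/-- The action of the dihedral group on the vertices of the regular `n`-gon, labelled by `ZMod n`:
`r 1` is the rotation `x ↦ x + 1` and `sr 0` the reflection `x ↦ -x`. -/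
def dihedralToPerm (n : ℕ) : DihedralGroup n →* Equiv.Perm (ZMod n) where
  toFun
    | .r i => Equiv.addRight i
    | .sr i => (Equiv.addRight i).trans (Equiv.neg _)
  map_one' := by ext x; exact add_zero x
  map_mul' := by
    rintro (i | i) (j | j) <;> ext x <;>
      simp only [DihedralGroup.r_mul_r, DihedralGroup.r_mul_sr, DihedralGroup.sr_mul_r,
        DihedralGroup.sr_mul_sr, Equiv.Perm.mul_apply, Equiv.trans_apply, Equiv.coe_addRight,
        Equiv.neg_apply] <;> ring

theorem dihedralToPerm_injective {n : ℕ} (h2 : (2 : ZMod n) ≠ 0) :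
    Function.Injective (dihedralToPerm n) := by
  refine (injective_iff_map_eq_one _).2 ?_
  rintro (i | i) h
  · have h0 : 0 + i = 0 := Equiv.congr_fun h 0
    rw [← DihedralGroup.r_zero, ← h0, zero_add]
  · have h0 : -(0 + i) = 0 := Equiv.congr_fun h 0
    have h1 : -(1 + i) = 1 := Equiv.congr_fun h 1
    exact absurd (by linear_combination h0 - h1) h2

theorem nonempty_mulEquiv_of_injective_of_card_eq {p : ℕ} [Fact p.Prime] {G H P : Type*} [Group G]
    [Group H] [Group P] [Finite P] {f : G →* P} {g : H →* P} (hf : Function.Injective f)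
    (hg : Function.Injective g) (hG : Nat.card G = p ^ (Nat.card P).factorization p)
    (hH : Nat.card H = p ^ (Nat.card P).factorization p) : Nonempty (G ≃* H) := by
  let ef := MonoidHom.ofInjective hf
  let eg := MonoidHom.ofInjective hg
  let S : Sylow p P := Sylow.ofCard f.range (by rw [← Nat.card_congr ef.toEquiv, hG])
  let T : Sylow p P := Sylow.ofCard g.range (by rw [← Nat.card_congr eg.toEquiv, hH])
  exact ⟨(ef.trans (S.equiv T)).trans eg.symm⟩

theorem nonempty_mulEquiv_dihedralGroup_four {G α : Type*} [Group G] {f : G →* Equiv.Perm α}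
    (hf : Function.Injective f) (hα : Nat.card α = 4) (hG : Nat.card G = 8) :
    Nonempty (G ≃* DihedralGroup 4) := by
  have : Finite α := Nat.finite_of_card_ne_zero (by omega)
  obtain ⟨e⟩ : Nonempty (ZMod 4 ≃ α) := Finite.card_eq.1 (by rw [Nat.card_zmod, hα])
  have hS₄ : 2 ^ (Nat.card (Equiv.Perm α)).factorization 2 = 8 := by
    have h24 : Nat.card (Equiv.Perm α) = 2 ^ 3 * 3 := by rw [Nat.card_perm, hα]; rfl
    rw [h24, Nat.factorization_mul_apply_of_coprime (by norm_num),
      Nat.prime_two.factorization_pow, Nat.factorization_eq_zero_of_not_dvd (by norm_num)]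
    simp
  have hD : Function.Injective (e.permCongrHom.toMonoidHom.comp (dihedralToPerm 4)) :=
    e.permCongrHom.injective.comp (dihedralToPerm_injective (by decide))
  exact nonempty_mulEquiv_of_injective_of_card_eq (p := 2) hf hD (hG.trans hS₄.symm)
    (DihedralGroup.nat_card.trans hS₄.symm)

end Dihedral

section SplittingField

open Polynomial

theorem nonempty_aut_mulEquiv_dihedralGroup_four {F K : Type*} [Field F] [Field K] [Algebra F K]
    {p : F[X]} [p.IsSplittingField F K] (hp : p.Separable) (hdeg : p.natDegree = 4)
    (hK : Module.finrank F K = 8) : Nonempty (Gal(K/F) ≃* DihedralGroup 4) := by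
  have hsplits := IsSplittingField.splits K p
  have : Fact (p.map (algebraMap F K)).Splits := ⟨hsplits⟩
  have : IsGalois F K := .of_separable_splitting_field hp
  have : FiniteDimensional F K := IsSplittingField.finiteDimensional K p
  let e : Gal(K/F) ≃* p.Gal := (IsSplittingField.algEquiv K p).autCongr
  have hinj : Function.Injective ((Gal.galActionHom p K).comp e.toMonoidHom) :=
    (Gal.galActionHom_injective p K).comp e.injective
  refine nonempty_mulEquiv_dihedralGroup_four hinj ?_ ?_
  · rw [Nat.card_eq_fintype_card, card_rootSet_eq_natDegree hp hsplits, hdeg]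
  · rw [IsGalois.card_aut_eq_finrank, hK]

end SplittingField

section Quartic

open Polynomial

theorem natDegree_X_pow_four_add_sub_one {R : Type*} [Ring R] [Nontrivial R] (a : R) :
    (X ^ 4 + C a * X ^ 2 - 1 : R[X]).natDegree = 4 := by
  compute_degree!

theorem taylor_one_X_pow_four_add_sub_one {R : Type*} [CommRing R] (a : R) :
    taylor 1 (X ^ 4 + C a * X ^ 2 - 1) =
      X ^ 4 + C 4 * X ^ 3 + C (a + 6) * X ^ 2 + C (2 * a + 4) * X + C a := by
  simp only [map_add, map_sub, taylor_mul, taylor_pow, taylor_X, taylor_C, taylor_one, C_mul, C_1,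
    C_ofNat]
  ring

theorem irreducible_taylor_one_X_pow_four_add_sub_one {a : ℤ} (ha : a % 4 = 2) :
    Irreducible (taylor 1 (X ^ 4 + C a * X ^ 2 - 1)) := by
  rw [taylor_one_X_pow_four_add_sub_one]
  set q : ℤ[X] := X ^ 4 + C 4 * X ^ 3 + C (a + 6) * X ^ 2 + C (2 * a + 4) * X + C a with hq
  have hdeg : q.natDegree = 4 := by rw [hq]; compute_degree!
  have hmonic : q.Monic := by rw [hq]; monicity!
  have hprime : (Ideal.span {(2 : ℤ)}).IsPrime :=
    (Ideal.span_singleton_prime two_ne_zero).2 Int.prime_two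
  have hcoeff_zero : q.coeff 0 = a := by simp [hq]
  have heis : q.IsEisensteinAt (Ideal.span {2}) :=
    { leading := by
        rw [hmonic.leadingCoeff, Ideal.mem_span_singleton]
        norm_num
      mem := fun {n} hn => by
        rw [hdeg] at hn
        rw [Ideal.mem_span_singleton]
        interval_cases n <;> simp [hq, coeff_X, coeff_X_pow, -map_add, -eq_intCast] <;> omega
      notMem := by
        rw [hcoeff_zero, Ideal.span_singleton_pow, Ideal.mem_span_singleton]
        omega }
  exact heis.irreducible hprime hmonic.isPrimitive (by omega)

theorem irreducible_X_pow_four_add_sub_one {a : ℤ} (ha : a % 4 = 2) :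
    Irreducible (X ^ 4 + C a * X ^ 2 - 1 : ℤ[X]) :=
  (MulEquiv.irreducible_iff (taylorEquiv (1 : ℤ))).1
    (irreducible_taylor_one_X_pow_four_add_sub_one ha)

theorem irreducible_X_pow_four_add_sub_one_rat {a : ℤ} (ha : a % 4 = 2) :
    Irreducible (X ^ 4 + C (a : ℚ) * X ^ 2 - 1 : ℚ[X]) := by
  have hmonic : (X ^ 4 + C a * X ^ 2 - 1 : ℤ[X]).Monic := by monicity!
  simpa using (IsPrimitive.Int.irreducible_iff_irreducible_map_cast hmonic.isPrimitive).1
    (irreducible_X_pow_four_add_sub_one ha)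

theorem adjoin_rootSet_X_pow_four_add_sub_one {F L : Type*} [Field F] [Field L] [Algebra F L]
    {a : F} {b i : L} (hi : i ^ 2 = -1) (hb : b ^ 4 + algebraMap F L a * b ^ 2 = 1) :
    adjoin F ((X ^ 4 + C a * X ^ 2 - 1 : F[X]).rootSet L) = F⟮b, i⟯ := by
  have hb0 : b ≠ 0 := by rintro rfl; simp at hb
  have hp : (X ^ 4 + C a * X ^ 2 - 1 : F[X]) ≠ 0 :=
    ne_zero_of_natDegree_gt (n := 0) (by rw [natDegree_X_pow_four_add_sub_one]; norm_num)
  have mem_rootSet_iff (x : L) : x ∈ (X ^ 4 + C a * X ^ 2 - 1 : F[X]).rootSet L ↔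
      x ^ 4 + algebraMap F L a * x ^ 2 - 1 = 0 := by
    simp [mem_rootSet, hp]
  apply le_antisymm
  · have hbK : b ∈ F⟮b, i⟯ := subset_adjoin _ _ (by simp)
    have hiK : i ∈ F⟮b, i⟯ := subset_adjoin _ _ (by simp)
    refine adjoin_le_iff.2 fun x hx => ?_
    rw [mem_rootSet_iff] at hx
    have hfactor : (x ^ 2 - b ^ 2) * ((x * b) ^ 2 - i ^ 2) = 0 := by
      linear_combination b ^ 2 * hx - x ^ 2 * hb - (x ^ 2 - b ^ 2) * hi
    rcases mul_eq_zero.1 hfactor with h | h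
    · rcases sq_eq_sq_iff_eq_or_eq_neg.1 (sub_eq_zero.1 h) with rfl | rfl
      exacts [hbK, neg_mem hbK]
    · rw [← mul_div_cancel_right₀ x hb0]
      rcases sq_eq_sq_iff_eq_or_eq_neg.1 (sub_eq_zero.1 h) with h | h <;> rw [h]
      exacts [div_mem hiK hbK, div_mem (neg_mem hiK) hbK]
  · have hbR : b ∈ (X ^ 4 + C a * X ^ 2 - 1 : F[X]).rootSet L :=
      (mem_rootSet_iff b).2 (by linear_combination hb)
    have hiR : i / b ∈ (X ^ 4 + C a * X ^ 2 - 1 : F[X]).rootSet L := by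
      rw [mem_rootSet_iff]
      field_simp
      linear_combination (i ^ 2 - 1 + algebraMap F L a * b ^ 2) * hi - hb
    refine adjoin_le_iff.2 (Set.pair_subset (subset_adjoin _ _ hbR) ?_)
    rw [← mul_div_cancel₀ i hb0]
    exact mul_mem (subset_adjoin _ _ hbR) (subset_adjoin _ _ hiR)

end Quartic

section AdjoinI

open Polynomial

variable {F : Type*} [Field F] [Algebra F ℝ] [Algebra F ℂ] [IsScalarTower F ℝ ℂ]

theorem I_notMem_adjoin_ofReal (x : ℝ) : Complex.I ∉ F⟮(x : ℂ)⟯ := by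
  have hle : F⟮(x : ℂ)⟯ ≤ (IsScalarTower.toAlgHom F ℝ ℂ).fieldRange :=
    adjoin_simple_le_iff.2 ⟨x, rfl⟩
  intro hI
  obtain ⟨y, hy⟩ := hle hI
  simpa using congrArg Complex.im hy

theorem finrank_adjoin_ofReal_I (x : ℝ) :
    Module.finrank F F⟮(x : ℂ), Complex.I⟯ = Module.finrank F F⟮(x : ℂ)⟯ * 2 := by
  have hint : IsIntegral F⟮(x : ℂ)⟯ Complex.I := Complex.isIntegral_int_I.tower_top
  have hle : (minpoly F⟮(x : ℂ)⟯ Complex.I).natDegree ≤ 2 := by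
    have h0 : aeval Complex.I (X ^ 2 + 1 : F⟮(x : ℂ)⟯[X]) = 0 := by simp
    exact (natDegree_le_of_dvd (minpoly.dvd _ _ h0)
      (Monic.ne_zero (by monicity!))).trans (by compute_degree)
  have hge : 2 ≤ (minpoly F⟮(x : ℂ)⟯ Complex.I).natDegree :=
    (minpoly.two_le_natDegree_iff hint).2 fun ⟨y, hy⟩ =>
      I_notMem_adjoin_ofReal x (hy.subst (motive := (· ∈ F⟮(x : ℂ)⟯)) y.2)
  have h2 := (adjoin.finrank hint).trans (hle.antisymm hge)
  rw [← adjoin_simple_adjoin_simple, ← h2]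
  exact (Module.finrank_mul_finrank F F⟮(x : ℂ)⟯ F⟮(x : ℂ)⟯⟮Complex.I⟯).symm

end AdjoinI

section EighthRoot

theorem mem_iff_of_pow_four_eq_neg_one {L S : Type*} [Field L] [NeZero (2 : L)] [SetLike S L]
    [SubfieldClass S L] {K : S} {i s ζ : L} (hi : i ^ 2 = -1) (hs : s ^ 2 = 2) (hsK : s ∈ K)
    (hζ : ζ ^ 4 = -1) : ζ ∈ K ↔ i ∈ K := by
  have hζi : ζ ^ 2 = i ∨ ζ ^ 2 = -i :=
    sq_eq_sq_iff_eq_or_eq_neg.1 (by linear_combination hζ - hi)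
  have hζs : 2 * ζ = s * (1 + ζ ^ 2) ∨ 2 * ζ = -(s * (1 + ζ ^ 2)) :=
    sq_eq_sq_iff_eq_or_eq_neg.1 (by linear_combination -2 * hζ - (1 + ζ ^ 2) ^ 2 * hs)
  have hsq : ζ ^ 2 ∈ K ↔ i ∈ K := by
    rcases hζi with h | h <;> simp [h]
  rw [← hsq]
  refine ⟨fun h => pow_mem h 2, fun h => ?_⟩
  have hmem : s * (1 + ζ ^ 2) ∈ K := mul_mem hsK (add_mem (one_mem K) h)
  have h2ζ : 2 * ζ ∈ K := by
    rcases hζs with h | h <;> simpa [h] using hmem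
  rw [← mul_div_cancel_left₀ ζ (two_ne_zero (α := L))]
  exact div_mem h2ζ (ofNat_mem K 2)

theorem adjoin_simple_eq_adjoin_pair_of_pow_four_eq_neg {F L : Type*} [Field F] [Field L]
    [NeZero (2 : L)] [Algebra F L] {b i m : L} (hi : i ^ 2 = -1) (hb : b ^ 4 + 2 * b ^ 2 = 1)
    (hm : m ^ 4 = -b ^ 4) : F⟮m⟯ = F⟮b, i⟯ := by
  have hb0 : b ≠ 0 := by rintro rfl; simp at hb
  have hm0 : m ≠ 0 := by rintro rfl; simp [hb0] at hm
  have hs : (b ^ 2 + 1) ^ 2 = 2 := by linear_combination hb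
  have hζ : (m / b) ^ 4 = -1 := by field_simp; exact hm
  apply le_antisymm
  · have hbK : b ∈ F⟮b, i⟯ := subset_adjoin _ _ (by simp)
    have hiK : i ∈ F⟮b, i⟯ := subset_adjoin _ _ (by simp)
    have hζK : m / b ∈ F⟮b, i⟯ :=
      (mem_iff_of_pow_four_eq_neg_one hi hs (add_mem (pow_mem hbK 2) (one_mem _)) hζ).2 hiK
    rw [adjoin_simple_le_iff, ← div_mul_cancel₀ m hb0]
    exact mul_mem hζK hbK
  · have hmK : m ∈ F⟮m⟯ := mem_adjoin_simple_self F m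
    have hb2K : b ^ 2 ∈ F⟮m⟯ := by
      have h : b ^ 2 = (m ^ 4 + 1) / 2 := by
        rw [eq_div_iff two_ne_zero]
        linear_combination hb - hm
      rw [h]
      exact div_mem (add_mem (pow_mem hmK 4) (one_mem _)) (ofNat_mem _ 2)
    have hsK : b ^ 2 + 1 ∈ F⟮m⟯ := add_mem hb2K (one_mem _)
    have hiK : i ∈ F⟮m⟯ := by
      have hmi : m ^ 2 = i * b ^ 2 ∨ m ^ 2 = -(i * b ^ 2) :=
        sq_eq_sq_iff_eq_or_eq_neg.1 (by linear_combination hm - b ^ 4 * hi)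
      have hib : i * b ^ 2 ∈ F⟮m⟯ := by
        rcases hmi with h | h <;> simpa [h] using pow_mem hmK 2
      rw [← mul_div_cancel_right₀ i (pow_ne_zero 2 hb0)]
      exact div_mem hib hb2K
    have hζK : m / b ∈ F⟮m⟯ := (mem_iff_of_pow_four_eq_neg_one hi hs hsK hζ).2 hiK
    refine adjoin_le_iff.2 (Set.pair_subset ?_ hiK)
    rw [← div_div_cancel₀ (b := b) hm0]
    exact div_mem hmK hζK

end EighthRoot

section GaloisGroup

open Polynomial

theorem finrank_adjoin_root_X_pow_four_add_sub_one {L : Type*} [Field L] [Algebra ℚ L] {a : ℤ}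
    (ha : a % 4 = 2) {b : L} (hb : b ^ 4 + a * b ^ 2 = 1) : Module.finrank ℚ ℚ⟮b⟯ = 4 := by
  have hmonic : (X ^ 4 + C (a : ℚ) * X ^ 2 - 1 : ℚ[X]).Monic := by monicity!
  have hroot : aeval b (X ^ 4 + C (a : ℚ) * X ^ 2 - 1 : ℚ[X]) = 0 := by simp [hb]
  rw [adjoin.finrank ⟨_, hmonic, hroot⟩, ← natDegree_X_pow_four_add_sub_one (a : ℚ),
    minpoly.eq_of_irreducible_of_monic (irreducible_X_pow_four_add_sub_one_rat ha) hroot hmonic]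

theorem galois_group_adjoin_root_I {a : ℤ} (ha : a % 4 = 2) {b : ℝ}
    (hb : b ^ 4 + a * b ^ 2 = 1) :
    IsGalois ℚ ℚ⟮(b : ℂ), Complex.I⟯ ∧ Module.finrank ℚ ℚ⟮(b : ℂ), Complex.I⟯ = 8 ∧
      Nonempty (Gal(ℚ⟮(b : ℂ), Complex.I⟯/ℚ) ≃* DihedralGroup 4) := by
  have hbC : (b : ℂ) ^ 4 + a * (b : ℂ) ^ 2 = 1 := mod_cast hb
  have hsep := (irreducible_X_pow_four_add_sub_one_rat ha).separable
  have : (X ^ 4 + C (a : ℚ) * X ^ 2 - 1 : ℚ[X]).IsSplittingField ℚ ℚ⟮(b : ℂ), Complex.I⟯ := by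
    rw [← adjoin_rootSet_X_pow_four_add_sub_one Complex.I_sq (a := (a : ℚ)) (by simpa using hbC)]
    exact adjoin_rootSet_isSplittingField (IsAlgClosed.splits _)
  have hfinrank : Module.finrank ℚ ℚ⟮(b : ℂ), Complex.I⟯ = 8 := by
    rw [finrank_adjoin_ofReal_I, finrank_adjoin_root_X_pow_four_add_sub_one ha hbC]
  exact ⟨.of_separable_splitting_field hsep, hfinrank,
    nonempty_aut_mulEquiv_dihedralGroup_four hsep (natDegree_X_pow_four_add_sub_one _) hfinrank⟩

end GaloisGroup

theorem sq_sqrt_sqrt_two_sub_one : √(√2 - 1) ^ 2 = √2 - 1 :=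
  Real.sq_sqrt (sub_nonneg.2 (Real.one_le_sqrt.2 one_le_two))

theorem sqrt_sqrt_two_sub_one_pow_four : √(√2 - 1) ^ 4 = 3 - 2 * √2 := by
  have h2 : √2 ^ 2 = 2 := Real.sq_sqrt zero_le_two
  linear_combination (√(√2 - 1) ^ 2 + √2 - 1) * sq_sqrt_sqrt_two_sub_one + h2

theorem sqrt_sqrt_two_sub_one_root : √(√2 - 1) ^ 4 + 2 * √(√2 - 1) ^ 2 = 1 := by
  linear_combination sqrt_sqrt_two_sub_one_pow_four + 2 * sq_sqrt_sqrt_two_sub_one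

/-- Let `m` be a fixed fourth root of `−3 + 2√2` in `ℂ`. Then `ℚ(m)/ℚ` is a Galois
extension of degree 8 whose Galois group is isomorphic to the dihedral group `D₈`
of order 8. -/
theorem galois_group_Qm (m : ℂ) (hm : m^4 = -3 + 2 * Real.sqrt 2) :
    IsGalois ℚ ↥(adjoin ℚ ({m} : Set ℂ)) ∧
    Module.finrank ℚ ↥(adjoin ℚ ({m} : Set ℂ)) = 8 ∧
    Nonempty ((↥(adjoin ℚ ({m} : Set ℂ)) ≃ₐ[ℚ] ↥(adjoin ℚ ({m} : Set ℂ))) ≃*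
      DihedralGroup 4) := by
  have hroot : (√(√2 - 1) : ℂ) ^ 4 + 2 * (√(√2 - 1) : ℂ) ^ 2 = 1 :=
    mod_cast sqrt_sqrt_two_sub_one_root
  have hpow : (√(√2 - 1) : ℂ) ^ 4 = 3 - 2 * √2 := mod_cast sqrt_sqrt_two_sub_one_pow_four
  have hadjoin : ℚ⟮m⟯ = ℚ⟮(√(√2 - 1) : ℂ), Complex.I⟯ :=
    adjoin_simple_eq_adjoin_pair_of_pow_four_eq_neg Complex.I_sq hroot
      (by linear_combination hm + hpow)
  rw [hadjoin]
  exact galois_group_adjoin_root_I (a := 2) rfl (mod_cast sqrt_sqrt_two_sub_one_root)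
end

section
/- Let n = √(1+√2) ∈ ℝ. Then ℚ(i, n) is a Galois extension of ℚ of degree 8 whose Galois group is isomorphic to the dihedral group D₈ of order 8. -/
open IntermediateField

/-!
The roots of `f = X⁴ + aX² + c` come in pairs `±n`, `±s / n` with `s² = c`, so `f` has splitting
field `K(s, n)`. If `f` is irreducible and `s ∉ K(n)`, this field has degree `4 * 2 = 8`. The Galois
group permutes the four roots faithfully, so it is a Sylow `2`-subgroup of `S₄`; the dihedral group
acting on the vertices of a square is another one, and the two are conjugate.

The number `n = √(1 + √2)` is a root of `X⁴ - 2X² - 1`, which is irreducible by Eisenstein's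
criterion at `2` after the substitution `X ↦ X + 1`; here `s = i` is not in the real field `ℚ(n)`.
-/

theorem nonempty_mulEquiv_of_injective_of_card_eq_ordProj {G₁ G₂ H : Type*} [Group G₁] [Group G₂]
    [Group H] [Finite H] {p : ℕ} [Fact p.Prime] {φ₁ : G₁ →* H} {φ₂ : G₂ →* H}
    (hφ₁ : Function.Injective φ₁) (hφ₂ : Function.Injective φ₂)
    (h₁ : Nat.card G₁ = ordProj[p] (Nat.card H)) (h₂ : Nat.card G₂ = ordProj[p] (Nat.card H)) :
    Nonempty (G₁ ≃* G₂) := by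
  let e₁ := MonoidHom.ofInjective hφ₁
  let e₂ := MonoidHom.ofInjective hφ₂
  let P₁ : Sylow p H := .ofCard φ₁.range ((Nat.card_congr e₁.toEquiv).symm.trans h₁)
  let P₂ : Sylow p H := .ofCard φ₂.range ((Nat.card_congr e₂.toEquiv).symm.trans h₂)
  exact ⟨e₁.trans ((P₁.equiv P₂).trans e₂.symm)⟩

/-- The action of the dihedral group on the vertices of the regular `n`-gon, which are labelled
cyclically by `ZMod n`; `sr 0` is the reflection fixing the vertex `0`. -/
def dihedralGroupToPerm (n : ℕ) : DihedralGroup n →* Equiv.Perm (ZMod n) where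
  toFun
    | .r i => Equiv.addLeft i
    | .sr i => Equiv.subLeft (-i)
  map_one' := by
    rw [DihedralGroup.one_def]
    exact Equiv.addLeft_zero
  map_mul' := by
    rintro (i | i) (j | j) <;> refine Equiv.ext fun x ↦ ?_ <;>
      simp only [DihedralGroup.r_mul_r, DihedralGroup.r_mul_sr, DihedralGroup.sr_mul_r,
        DihedralGroup.sr_mul_sr, Equiv.Perm.mul_apply, Equiv.coe_addLeft, Equiv.subLeft_apply] <;>
      ring

theorem dihedralGroupToPerm_injective {n : ℕ} (hn : (2 : ZMod n) ≠ 0) :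
    Function.Injective (dihedralGroupToPerm n) := by
  rw [injective_iff_map_eq_one]
  rintro (i | i) h
  · have h0 : i + 0 = 0 := Equiv.congr_fun h 0
    rw [← add_zero i, h0, DihedralGroup.one_def]
  · have h0 : -i - 0 = 0 := Equiv.congr_fun h 0
    have h1 : -i - 1 = 1 := Equiv.congr_fun h 1
    exact absurd (by linear_combination h0 - h1) hn

theorem nonempty_mulEquiv_dihedralGroup_four_of_injective_perm {G α : Type*} [Group G]
    (hG : Nat.card G = 8) (hα : Nat.card α = 4) {φ : G →* Equiv.Perm α}
    (hφ : Function.Injective φ) : Nonempty (G ≃* DihedralGroup 4) := by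
  have : Finite α := Nat.finite_of_card_ne_zero (by lia)
  have h24 : Nat.card (Equiv.Perm (ZMod 4)) = 2 ^ 3 * 3 := by
    rw [Nat.card_perm, Nat.card_zmod]; rfl
  have h8 : ordProj[2] (Nat.card (Equiv.Perm (ZMod 4))) = 8 := by
    rw [h24, Nat.ordProj_mul 2 (by decide) (by decide), Nat.ordProj_self_pow Nat.prime_two,
      Nat.factorization_eq_zero_of_not_dvd (by decide)]
    rfl
  obtain ⟨vertices⟩ : Nonempty (α ≃ ZMod 4) := Finite.card_eq.1 (hα.trans (Nat.card_zmod 4).symm)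
  let e : Equiv.Perm α ≃* Equiv.Perm (ZMod 4) := vertices.permCongrHom
  exact nonempty_mulEquiv_of_injective_of_card_eq_ordProj (p := 2) (φ₁ := e.toMonoidHom.comp φ)
    (e.injective.comp hφ) (dihedralGroupToPerm_injective (by decide))
    (hG.trans h8.symm) (DihedralGroup.nat_card.trans h8.symm)

section

open Polynomial

section FieldExtensions

variable {K L : Type*} [Field K] [Field L] [Algebra K L]

theorem nonempty_gal_mulEquiv_dihedralGroup_four (f : K[X]) [f.IsSplittingField K L]
    (hsep : f.Separable) (hdeg : f.natDegree = 4) (hL : Module.finrank K L = 8) :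
    Nonempty (Gal(L/K) ≃* DihedralGroup 4) := by
  have : FiniteDimensional K L := IsSplittingField.finiteDimensional L f
  have : IsGalois K L := IsGalois.of_separable_splitting_field hsep
  have hsplits : (f.map (algebraMap K L)).Splits := IsSplittingField.splits L f
  have : Fact (f.map (algebraMap K L)).Splits := ⟨hsplits⟩
  have hroots : Nat.card (f.rootSet L) = 4 := by
    rw [Nat.card_eq_fintype_card, card_rootSet_eq_natDegree hsep hsplits, hdeg]
  let e : Gal(L/K) ≃* f.Gal := AlgEquiv.autCongr (IsSplittingField.algEquiv L f)
  exact nonempty_mulEquiv_dihedralGroup_four_of_injective_perm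
    ((IsGalois.card_aut_eq_finrank K L).trans hL) hroots
    (φ := (Gal.galActionHom f L).comp e.toMonoidHom)
    ((Gal.galActionHom_injective f L).comp e.injective)

theorem finrank_adjoin_simple_eq_two_of_sq_eq_algebraMap {c : K} {s : L}
    (hs : s ^ 2 = algebraMap K L c) (hsK : s ∉ (algebraMap K L).range) :
    Module.finrank K K⟮s⟯ = 2 := by
  have hroot : aeval s (X ^ 2 - C c) = 0 := by simp [hs]
  have hmonic : (X ^ 2 - C c).Monic := monic_X_pow_sub_C c two_ne_zero
  have hint : IsIntegral K s := ⟨_, hmonic, hroot⟩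
  rw [adjoin.finrank hint]
  refine le_antisymm ?_ ((minpoly.two_le_natDegree_iff hint).2 hsK)
  exact (natDegree_le_of_dvd (minpoly.dvd K s hroot) hmonic.ne_zero).trans_eq natDegree_X_pow_sub_C

theorem finrank_adjoin_pair_of_sq_eq_algebraMap {c : K} {s n : L} (hs : s ^ 2 = algebraMap K L c)
    (hsn : s ∉ K⟮n⟯) : Module.finrank K K⟮s, n⟯ = Module.finrank K K⟮n⟯ * 2 := by
  have hs' : s ^ 2 = algebraMap K⟮n⟯ L (algebraMap K K⟮n⟯ c) := hs
  have hsn' : s ∉ (algebraMap K⟮n⟯ L).range := by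
    rintro ⟨y, rfl⟩
    exact hsn y.2
  rw [Set.pair_comm, ← adjoin_simple_adjoin_simple,
    ← finrank_adjoin_simple_eq_two_of_sq_eq_algebraMap hs' hsn']
  exact (Module.finrank_mul_finrank K K⟮n⟯ K⟮n⟯⟮s⟯).symm

end FieldExtensions

section Biquadratic

/-- The biquadratic polynomial `X⁴ + aX² + c`. -/
noncomputable def biquadratic {R : Type*} [Semiring R] (a c : R) : R[X] :=
  X ^ 4 + C a * X ^ 2 + C c

theorem map_biquadratic {R S : Type*} [Semiring R] [Semiring S] (φ : R →+* S) (a c : R) :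
    (biquadratic a c).map φ = biquadratic (φ a) (φ c) := by
  simp [biquadratic]

theorem monic_biquadratic {R : Type*} [Semiring R] (a c : R) : (biquadratic a c).Monic := by
  unfold biquadratic
  monicity!

theorem natDegree_biquadratic {R : Type*} [Semiring R] [Nontrivial R] (a c : R) :
    (biquadratic a c).natDegree = 4 := by
  unfold biquadratic
  compute_degree!

variable {K L : Type*} [Field K] [Field L] [Algebra K L] {a c : K} {s n : L}

theorem separable_biquadratic (h2 : (2 : K) ≠ 0) (hirr : Irreducible (biquadratic a c)) :
    (biquadratic a c).Separable := by
  rw [separable_iff_derivative_ne_zero hirr]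
  intro h
  have hlead : (biquadratic a c).coeff 4 = 1 := by
    rw [← natDegree_biquadratic a c, (monic_biquadratic a c).coeff_natDegree]
  have h4 : (biquadratic a c).derivative.coeff 3 = 2 ^ 2 := by
    rw [coeff_derivative, hlead]
    norm_num
  rw [h, coeff_zero] at h4
  exact pow_ne_zero 2 h2 h4.symm

theorem finrank_adjoin_root_biquadratic (hirr : Irreducible (biquadratic a c))
    (hn : aeval n (biquadratic a c) = 0) : Module.finrank K K⟮n⟯ = 4 := by
  rw [adjoin.finrank ⟨_, monic_biquadratic a c, hn⟩,
    ← minpoly.eq_of_irreducible_of_monic hirr hn (monic_biquadratic a c), natDegree_biquadratic]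

-- The two values of `X²` at the roots have product `c = s²`, so they are `n²` and `(s / n)²`.
theorem biquadratic_eq_prod_X_sub_C (hs : s ^ 2 = algebraMap K L c) (hn0 : n ≠ 0)
    (hn : aeval n (biquadratic a c) = 0) :
    (biquadratic a c).map (algebraMap K L) =
      (X - C n) * (X - C (-n)) * ((X - C (s / n)) * (X - C (-(s / n)))) := by
  have ha : algebraMap K L a = -(n ^ 2 + (s / n) ^ 2) := by
    simp only [biquadratic, map_add, map_mul, map_pow, aeval_X, aeval_C, ← hs] at hn
    field_simp
    linear_combination hn
  have hc : algebraMap K L c = n ^ 2 * (s / n) ^ 2 := by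
    rw [← hs]
    field_simp
  rw [map_biquadratic, ha, hc, biquadratic]
  simp only [map_neg, map_add, map_mul, map_pow]
  ring

theorem splits_biquadratic (hs : s ^ 2 = algebraMap K L c) (hn0 : n ≠ 0)
    (hn : aeval n (biquadratic a c) = 0) : ((biquadratic a c).map (algebraMap K L)).Splits := by
  rw [biquadratic_eq_prod_X_sub_C hs hn0 hn]
  exact ((Splits.X_sub_C _).mul (.X_sub_C _)).mul ((Splits.X_sub_C _).mul (.X_sub_C _))

theorem rootSet_biquadratic (hs : s ^ 2 = algebraMap K L c) (hn0 : n ≠ 0)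
    (hn : aeval n (biquadratic a c) = 0) :
    (biquadratic a c).rootSet L = {n, -n, s / n, -(s / n)} := by
  ext x
  rw [mem_rootSet_of_ne (monic_biquadratic a c).ne_zero, aeval_def, ← eval_map,
    biquadratic_eq_prod_X_sub_C hs hn0 hn]
  simp [sub_eq_zero, add_eq_zero_iff_eq_neg, or_assoc]

theorem adjoin_rootSet_biquadratic (hs : s ^ 2 = algebraMap K L c) (hn0 : n ≠ 0)
    (hn : aeval n (biquadratic a c) = 0) : adjoin K ((biquadratic a c).rootSet L) = K⟮s, n⟯ := by
  rw [rootSet_biquadratic hs hn0 hn]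
  apply le_antisymm
  · have hsK : s ∈ K⟮s, n⟯ := subset_adjoin K _ (by simp)
    have hnK : n ∈ K⟮s, n⟯ := subset_adjoin K _ (by simp)
    rw [adjoin_le_iff]
    rintro x (rfl | rfl | rfl | rfl)
    exacts [hnK, neg_mem hnK, div_mem hsK hnK, neg_mem (div_mem hsK hnK)]
  · have hnK : n ∈ adjoin K {n, -n, s / n, -(s / n)} := subset_adjoin K _ (by simp)
    have hsnK : s / n ∈ adjoin K {n, -n, s / n, -(s / n)} := subset_adjoin K _ (by simp)
    rw [adjoin_le_iff]
    rintro x (rfl | rfl)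
    exacts [by simpa [hn0] using mul_mem hsnK hnK, hnK]

theorem isSplittingField_biquadratic (hs : s ^ 2 = algebraMap K L c) (hn0 : n ≠ 0)
    (hn : aeval n (biquadratic a c) = 0) : (biquadratic a c).IsSplittingField K K⟮s, n⟯ := by
  rw [← adjoin_rootSet_biquadratic hs hn0 hn]
  exact adjoin_rootSet_isSplittingField (splits_biquadratic hs hn0 hn)

theorem galois_group_Qin_general (h2 : (2 : K) ≠ 0) (hirr : Irreducible (biquadratic a c))
    (hs : s ^ 2 = algebraMap K L c) (hn : aeval n (biquadratic a c) = 0) (hsn : s ∉ K⟮n⟯) :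
    IsGalois K K⟮s, n⟯ ∧ Module.finrank K K⟮s, n⟯ = 8 ∧
      Nonempty (Gal(K⟮s, n⟯/K) ≃* DihedralGroup 4) := by
  have hn0 : n ≠ 0 := by
    rintro rfl
    have hs0 : s = 0 := by simpa [biquadratic, ← hs] using hn
    exact hsn (by rw [hs0]; exact zero_mem _)
  have hsep := separable_biquadratic h2 hirr
  have := isSplittingField_biquadratic hs hn0 hn
  have hdeg : Module.finrank K K⟮s, n⟯ = 8 := by
    rw [finrank_adjoin_pair_of_sq_eq_algebraMap hs hsn, finrank_adjoin_root_biquadratic hirr hn]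
  exact ⟨.of_separable_splitting_field hsep, hdeg,
    nonempty_gal_mulEquiv_dihedralGroup_four _ hsep (natDegree_biquadratic a c) hdeg⟩

end Biquadratic

theorem taylor_one_biquadratic {R : Type*} [CommSemiring R] (a c : R) :
    taylor 1 (biquadratic a c) =
      X ^ 4 + C 4 * X ^ 3 + C (a + 6) * X ^ 2 + C (2 * a + 4) * X + C (a + c + 1) := by
  simp only [biquadratic, map_add, map_mul, taylor_mul, taylor_pow, taylor_X, taylor_C, map_one,
    map_ofNat]
  ring

theorem isEisensteinAt_taylor_one_biquadratic {a c : ℤ} (ha : 2 ∣ a) (hac : a + c ≡ 1 [ZMOD 4]) :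
    (taylor 1 (biquadratic a c)).IsEisensteinAt (Ideal.span {2}) where
  leading := by
    rw [leadingCoeff_taylor, (monic_biquadratic _ _).leadingCoeff, Ideal.mem_span_singleton]
    decide
  mem {k} hk := by
    rw [natDegree_taylor, natDegree_biquadratic] at hk
    rw [Int.modEq_iff_dvd] at hac
    rw [Ideal.mem_span_singleton, taylor_one_biquadratic]
    simp only [coeff_add, coeff_C_mul, coeff_X_pow, coeff_X, coeff_C]
    interval_cases k <;> norm_num <;> lia
  notMem := by
    rw [Int.modEq_iff_dvd] at hac
    rw [Ideal.span_singleton_pow, Ideal.mem_span_singleton, taylor_one_biquadratic]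
    simp only [coeff_add, coeff_C_mul, coeff_X_pow, coeff_X_zero, coeff_C_zero]
    norm_num
    lia

theorem irreducible_biquadratic_intCast {a c : ℤ} (ha : 2 ∣ a) (hac : a + c ≡ 1 [ZMOD 4]) :
    Irreducible (biquadratic (a : ℚ) c) := by
  have hmonic := monic_biquadratic a c
  have hprime : (Ideal.span {(2 : ℤ)}).IsPrime :=
    (Ideal.span_singleton_prime two_ne_zero).2 Int.prime_two
  have hmap : (biquadratic a c).map (Int.castRingHom ℚ) = biquadratic (a : ℚ) c :=
    map_biquadratic _ a c
  rw [← hmap, ← IsPrimitive.Int.irreducible_iff_irreducible_map_cast hmonic.isPrimitive,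
    ← MulEquiv.irreducible_iff (taylorEquiv (1 : ℤ))]
  refine (isEisensteinAt_taylor_one_biquadratic ha hac).irreducible hprime ?_ ?_
  · exact Monic.isPrimitive (by rw [Monic, leadingCoeff_taylor, hmonic.leadingCoeff])
  · rw [natDegree_taylor, natDegree_biquadratic]
    norm_num

theorem irreducible_biquadratic_neg_two_neg_one : Irreducible (biquadratic (-2) (-1) : ℚ[X]) := by
  exact_mod_cast irreducible_biquadratic_intCast (a := -2) (c := -1) (by decide) (by decide)

theorem I_notMem_adjoin_ofReal_s7 (r : ℝ) : Complex.I ∉ ℚ⟮(r : ℂ)⟯ := by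
  have hle : ℚ⟮(r : ℂ)⟯ ≤ (Complex.ofRealAm.restrictScalars ℚ).fieldRange :=
    adjoin_simple_le_iff.2 ⟨r, rfl⟩
  intro hI
  obtain ⟨y, hy⟩ := hle hI
  simpa using congrArg Complex.im hy

theorem aeval_sqrt_one_add_sqrt_two_biquadratic :
    aeval ((√(1 + √2) : ℝ) : ℂ) (biquadratic (-2 : ℚ) (-1)) = 0 := by
  have h : √(1 + √2) ^ 2 = 1 + √2 := Real.sq_sqrt (by positivity)
  have h' : √2 ^ 2 = 2 := Real.sq_sqrt zero_le_two
  have hroot : √(1 + √2) ^ 4 - 2 * √(1 + √2) ^ 2 - 1 = 0 := by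
    linear_combination (√(1 + √2) ^ 2 + √2 - 1) * h + h'
  have hrootC : ((√(1 + √2) : ℝ) : ℂ) ^ 4 - 2 * (√(1 + √2) : ℝ) ^ 2 - 1 = 0 := by
    exact_mod_cast hroot
  simp only [biquadratic, map_add, map_mul, map_pow, aeval_X, map_neg, map_ofNat, map_one]
  linear_combination hrootC

end

/-- Let `n = √(1+√2) ∈ ℝ`. Then `ℚ(i, n)/ℚ` is a Galois extension of degree 8 whose
Galois group is isomorphic to the dihedral group `D₈` of order 8. -/
theorem galois_group_Qin (n : ℂ) (hn : n = Real.sqrt (1 + Real.sqrt 2)) :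
    IsGalois ℚ ↥(adjoin ℚ ({Complex.I, n} : Set ℂ)) ∧
    Module.finrank ℚ ↥(adjoin ℚ ({Complex.I, n} : Set ℂ)) = 8 ∧
    Nonempty ((↥(adjoin ℚ ({Complex.I, n} : Set ℂ)) ≃ₐ[ℚ]
        ↥(adjoin ℚ ({Complex.I, n} : Set ℂ))) ≃* DihedralGroup 4) := by
  subst hn
  exact galois_group_Qin_general two_ne_zero irreducible_biquadratic_neg_two_neg_one (by simp)
    aeval_sqrt_one_add_sqrt_two_biquadratic (I_notMem_adjoin_ofReal_s7 _)
end

section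
/- Every (a,b,c) ∈ ℂ³ satisfying 4 + 3a⁴ + 8a³b + 8a²b² − 4a³c − 8a²bc = 0 and a⁴ − 8a²b² − 16ab³ − 8b⁴ + 8a²bc + 24ab²c + 16b³c − 2a²c² − 8abc² − 8b²c² = 0 also satisfies a⁸ + 24a⁴ + 16 = 0 and 16(a+2b)c = 32ab + 32b² − 12a² − a⁶. -/
/-!
In terms of `x = a²` and `t = (a + 2b)c − 2b(a + b)` the two equations read `4xt = 4 + 3x²` and
`x² = 2t²`. Squaring the first and substituting the second gives the quartic for `x`, while
computing `8x³ = 16xt²` by using the first equation twice expresses `t` in terms of `x`. Neither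
step divides, so the relations hold over every commutative ring.
-/

section Conics

variable {R : Type*} [CommRing R] {x t : R}

theorem quartic_eq_zero_of_conics (h₁ : 4 * x * t = 4 + 3 * x ^ 2) (h₂ : x ^ 2 = 2 * t ^ 2) :
    x ^ 4 + 24 * x ^ 2 + 16 = 0 := by
  have hsq : (4 + 3 * x ^ 2) ^ 2 = 8 * x ^ 4 :=
    calc (4 + 3 * x ^ 2) ^ 2 = (4 * x * t) ^ 2 := by rw [h₁]
      _ = 8 * x ^ 2 * (2 * t ^ 2) := by ring
      _ = 8 * x ^ 4 := by rw [← h₂]; ring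
  linear_combination hsq

theorem sixteen_mul_eq_of_conics (h₁ : 4 * x * t = 4 + 3 * x ^ 2) (h₂ : x ^ 2 = 2 * t ^ 2) :
    16 * t = -12 * x - x ^ 3 := by
  have hcube : 8 * x ^ 3 = 16 * t + 12 * x + 9 * x ^ 3 :=
    calc 8 * x ^ 3 = 8 * x * x ^ 2 := by ring
      _ = 4 * t * (4 * x * t) := by rw [h₂]; ring
      _ = 16 * t + 3 * x * (4 * x * t) := by linear_combination 4 * t * h₁
      _ = 16 * t + 12 * x + 9 * x ^ 3 := by rw [h₁]; ring
  linear_combination -hcube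

end Conics

theorem family1_relations_general {R : Type*} [CommRing R] (a b c : R)
    (hf1 : 4 + 3 * a ^ 4 + 8 * a ^ 3 * b + 8 * a ^ 2 * b ^ 2
      - 4 * a ^ 3 * c - 8 * a ^ 2 * b * c = 0)
    (hg : a ^ 4 - 8 * a ^ 2 * b ^ 2 - 16 * a * b ^ 3 - 8 * b ^ 4
      + 8 * a ^ 2 * b * c + 24 * a * b ^ 2 * c + 16 * b ^ 3 * c
      - 2 * a ^ 2 * c ^ 2 - 8 * a * b * c ^ 2 - 8 * b ^ 2 * c ^ 2 = 0) :
    a ^ 8 + 24 * a ^ 4 + 16 = 0 ∧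
      16 * (a + 2 * b) * c = 32 * a * b + 32 * b ^ 2 - 12 * a ^ 2 - a ^ 6 := by
  let t := (a + 2 * b) * c - 2 * b * (a + b)
  have h₁ : 4 * a ^ 2 * t = 4 + 3 * (a ^ 2) ^ 2 := by linear_combination -hf1
  have h₂ : (a ^ 2) ^ 2 = 2 * t ^ 2 := by linear_combination hg
  constructor
  · linear_combination quartic_eq_zero_of_conics h₁ h₂
  · linear_combination sixteen_mul_eq_of_conics h₁ h₂

/-- Family 1 solutions of (E1): if `f₁ = 0` and `g = 0` then
`a⁸ + 24a⁴ + 16 = 0` and `16(a+2b)c = 32ab + 32b² − 12a² − a⁶`. -/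
theorem family1_relations (a b c : ℂ)
    (hf1 : 4 + 3*a^4 + 8*a^3*b + 8*a^2*b^2 - 4*a^3*c - 8*a^2*b*c = 0)
    (hg : a^4 - 8*a^2*b^2 - 16*a*b^3 - 8*b^4 + 8*a^2*b*c + 24*a*b^2*c + 16*b^3*c
      - 2*a^2*c^2 - 8*a*b*c^2 - 8*b^2*c^2 = 0) :
    a^8 + 24*a^4 + 16 = 0 ∧ 16*(a + 2*b)*c = 32*a*b + 32*b^2 - 12*a^2 - a^6 :=
  family1_relations_general a b c hf1 hg
end

section
/- Let (a,b,c) ∈ ℂ³ satisfy −4 + 3a⁴ + 8a³b + 8a²b² − 4a³c − 8a²bc = 0 and a⁴ − 8a²b² − 16ab³ − 8b⁴ + 8a²bc + 24ab²c + 16b³c − 2a²c² − 8abc² − 8b²c² = 0. If a⁴ − 4a² − 4 = 0 then 2(a+2b)c = (a+2b)² + 2, and if a⁴ + 4a² − 4 = 0 then 2(a+2b)c = (a+2b)² − 2. -/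
/-! Write `s = a + 2b`. Splitting `3a⁴` as `a⁴ + 2a⁴` completes a square,
`f₂ = a⁴ - 4 - 2a²(2sc - s²)`. Hence at a zero of `f₂` one has `a ≠ 0`, and `2sc - s²` is the
number `k` with `a⁴ - 4 = 2ka²`; Families 2A and 2B are the cases `k = 2` and `k = -2`. -/

section General

variable {R : Type*} [CommRing R] {a b c : R}

/-- The polynomial `f₂` whose vanishing, next to the equation `g = 0`, singles out the Family 2
solutions of (E1). It is written in the expanded form in which the theorem states it. -/
def family2Poly (a b c : R) : R :=
  -4 + 3 * a ^ 4 + 8 * a ^ 3 * b + 8 * a ^ 2 * b ^ 2 - 4 * a ^ 3 * c - 8 * a ^ 2 * b * c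

theorem family2Poly_eq_quartic_sub (a b c k : R) :
    family2Poly a b c =
      (a ^ 4 - 2 * k * a ^ 2 - 4) - 2 * a ^ 2 * (2 * (a + 2 * b) * c - ((a + 2 * b) ^ 2 + k)) := by
  unfold family2Poly
  ring

variable [NoZeroDivisors R] [NeZero (2 : R)]

theorem ne_zero_of_family2Poly_eq_zero (hf : family2Poly a b c = 0) : a ≠ 0 := by
  rintro rfl
  have two_sq_eq_zero : (2 : R) ^ 2 = 0 := by
    unfold family2Poly at hf
    linear_combination -hf
  exact two_ne_zero (eq_zero_of_pow_eq_zero two_sq_eq_zero)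

theorem family2_relations_general (hf : family2Poly a b c = 0) (k : R) :
    a ^ 4 - 2 * k * a ^ 2 - 4 = 0 ↔ 2 * (a + 2 * b) * c = (a + 2 * b) ^ 2 + k := by
  have two_mul_sq_ne_zero : 2 * a ^ 2 ≠ 0 :=
    mul_ne_zero two_ne_zero (pow_ne_zero 2 (ne_zero_of_family2Poly_eq_zero hf))
  rw [family2Poly_eq_quartic_sub a b c k, sub_eq_zero] at hf
  rw [hf, mul_eq_zero_iff_left two_mul_sq_ne_zero, sub_eq_zero]

end General

/-- Family 2 solutions of (E1): if `f₂ = 0` and `g = 0`, then for Family 2A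
(`a⁴ − 4a² − 4 = 0`) one has `2(a+2b)c = (a+2b)² + 2`, and for Family 2B
(`a⁴ + 4a² − 4 = 0`) one has `2(a+2b)c = (a+2b)² − 2`. -/
theorem family2_relations (a b c : ℂ)
    (hf2 : -4 + 3*a^4 + 8*a^3*b + 8*a^2*b^2 - 4*a^3*c - 8*a^2*b*c = 0)
    (hg : a^4 - 8*a^2*b^2 - 16*a*b^3 - 8*b^4 + 8*a^2*b*c + 24*a*b^2*c + 16*b^3*c
      - 2*a^2*c^2 - 8*a*b*c^2 - 8*b^2*c^2 = 0) :
    (a^4 - 4*a^2 - 4 = 0 → 2*(a + 2*b)*c = (a + 2*b)^2 + 2) ∧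
    (a^4 + 4*a^2 - 4 = 0 → 2*(a + 2*b)*c = (a + 2*b)^2 - 2) :=
  ⟨fun h ↦ (family2_relations_general hf2 2).1 (by linear_combination h),
    fun h ↦ ((family2_relations_general hf2 (-2)).1 (by linear_combination h)).trans
      (sub_eq_add_neg _ _).symm⟩
end

section
/- The set of triples (a,b,c) ∈ ℂ³ satisfying the equations (E1): −(1/64)·(−4 + 3a⁴ + 8a³b + 8a²b² − 4a³c − 8a²bc)·(4 + 3a⁴ + 8a³b + 8a²b² − 4a³c − 8a²bc) = 0 and −(1/8)·a²·(a⁴ − 8a²b² − 16ab³ − 8b⁴ + 8a²bc + 24ab²c + 16b³c − 2a²c² − 8abc² − 8b²c²) = 0 is infinite. -/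
/-!
Put `t = c (a + 2b) - 2b (a + b)`. If `2 ≠ 0`, the system (E1) only involves `a` and `t`: it says
`a² (3a² - 4t) = ±4` and `a⁴ = 2t²`. Hence, with one solution, the whole plane curve of `(b, c)`
having the same `a` and `t` consists of solutions, and over an infinite field this curve is infinite
because `c` can be solved for whenever `a + 2b ≠ 0`. With the sign `+`, eliminating `t` leaves
`a⁸ - 24a⁴ + 16 = (a⁴ - 4a² - 4) (a⁴ + 4a² - 4) = 0`; the first factor gives `t = (a² + 2) / 2`.
-/

namespace SolutionsE1

variable {K : Type*} [Field K]

/-- The solution set of the system (E1) over a field `K`. The coefficients `1/64` and `1/8` make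
sense only if `2 ≠ 0` in `K`. -/
def solutionSet (K : Type*) [Field K] : Set (K × K × K) :=
  {(a, b, c) : K × K × K |
    -(1/64) * (-4 + 3*a^4 + 8*a^3*b + 8*a^2*b^2 - 4*a^3*c - 8*a^2*b*c) *
        (4 + 3*a^4 + 8*a^3*b + 8*a^2*b^2 - 4*a^3*c - 8*a^2*b*c) = 0 ∧
      -(1/8) * a^2 * (a^4 - 8*a^2*b^2 - 16*a*b^3 - 8*b^4 + 8*a^2*b*c + 24*a*b^2*c + 16*b^3*c
        - 2*a^2*c^2 - 8*a*b*c^2 - 8*b^2*c^2) = 0}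

/-- The quantity through which (E1) depends on `b` and `c` once `a` is fixed. -/
def invariant (a b c : K) : K := c * (a + 2 * b) - 2 * b * (a + b)

theorem four_ne_zero_of_two_ne_zero [NeZero (2 : K)] : (4 : K) ≠ 0 := by
  simpa only [show (4 : K) = 2 ^ 2 by norm_num] using pow_ne_zero 2 (two_ne_zero (α := K))

theorem mem_solutionSet_iff [NeZero (2 : K)] {a b c : K} :
    (a, b, c) ∈ solutionSet K ↔
      (a ^ 2 * (3 * a ^ 2 - 4 * invariant a b c) = 4 ∨
        a ^ 2 * (3 * a ^ 2 - 4 * invariant a b c) = -4) ∧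
      a ^ 4 = 2 * invariant a b c ^ 2 := by
  set t := invariant a b c with ht
  have reduced : (a, b, c) ∈ solutionSet K ↔
      -(1 / 64) * (a ^ 2 * (3 * a ^ 2 - 4 * t) - 4) * (a ^ 2 * (3 * a ^ 2 - 4 * t) + 4) = 0 ∧
        -(1 / 8) * a ^ 2 * (a ^ 4 - 2 * t ^ 2) = 0 := by
    refine and_congr (Eq.congr_left ?_) (Eq.congr_left ?_) <;>
      rw [ht, invariant] <;> ring
  have neg_inv_ne_zero (n : ℕ) : -(1 / 2 ^ n : K) ≠ 0 :=
    neg_ne_zero.2 (one_div_ne_zero (pow_ne_zero n two_ne_zero))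
  have neg_inv_64_ne_zero : -(1 / 64 : K) ≠ 0 := by convert neg_inv_ne_zero 6; norm_num
  have neg_inv_8_ne_zero : -(1 / 8 : K) ≠ 0 := by convert neg_inv_ne_zero 3; norm_num
  have a_ne_zero (h : a ^ 2 * (3 * a ^ 2 - 4 * t) = 4 ∨ a ^ 2 * (3 * a ^ 2 - 4 * t) = -4) :
      a ≠ 0 := by
    rintro rfl
    exact four_ne_zero_of_two_ne_zero (by simpa [eq_comm] using h)
  simp only [reduced, mul_eq_zero, neg_inv_64_ne_zero, neg_inv_8_ne_zero, false_or, sub_eq_zero,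
    add_eq_zero_iff_eq_neg]
  exact and_congr_right fun h ↦ or_iff_right (pow_ne_zero 2 (a_ne_zero h))

theorem infinite_setOf_invariant_eq [Infinite K] [NeZero (2 : K)] (a t : K) :
    {q : K × K | invariant a q.1 q.2 = t}.Infinite := by
  have finite_bad : {b : K | a + 2 * b = 0}.Finite :=
    Set.Subsingleton.finite fun b hb b' hb' ↦
      mul_left_cancel₀ two_ne_zero (add_left_cancel (hb.trans hb'.symm))
  refine .of_image Prod.fst (finite_bad.infinite_compl.mono fun b hb ↦ ?_)
  refine ⟨(b, (t + 2 * b * (a + b)) / (a + 2 * b)), ?_, rfl⟩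
  exact sub_eq_iff_eq_add.2 (div_mul_cancel₀ _ hb)

theorem solutionSet_infinite_of_nonempty [Infinite K] [NeZero (2 : K)]
    (h : (solutionSet K).Nonempty) : (solutionSet K).Infinite := by
  obtain ⟨⟨a, b, c⟩, habc⟩ := h
  refine ((infinite_setOf_invariant_eq a (invariant a b c)).image
    (Prod.mk_right_injective a).injOn).mono ?_
  rintro _ ⟨⟨b', c'⟩, hq : invariant a b' c' = invariant a b c, rfl⟩
  rw [mem_solutionSet_iff] at habc ⊢
  rwa [hq]

theorem mem_solutionSet_of_pow_four_eq [NeZero (2 : K)] {a : K} (ha : a ^ 4 = 4 * a ^ 2 + 4) :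
    (a, 0, (a ^ 2 + 2) / (2 * a)) ∈ solutionSet K := by
  have a_ne_zero : a ≠ 0 := by
    rintro rfl
    exact four_ne_zero_of_two_ne_zero (K := K) (by simpa using ha.symm)
  have two_mul_invariant : 2 * invariant a 0 ((a ^ 2 + 2) / (2 * a)) = a ^ 2 + 2 := by
    unfold invariant; field_simp; ring
  set t := invariant a 0 ((a ^ 2 + 2) / (2 * a))
  refine mem_solutionSet_iff.2 ⟨.inl ?_, ?_⟩
  · linear_combination ha - 2 * a ^ 2 * two_mul_invariant
  · refine mul_left_cancel₀ (two_ne_zero (α := K)) ?_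
    linear_combination ha - (2 * t + a ^ 2 + 2) * two_mul_invariant

theorem exists_pow_four_eq (K : Type*) [Field K] [IsAlgClosed K] :
    ∃ a : K, a ^ 4 = 4 * a ^ 2 + 4 := by
  obtain ⟨s, hs⟩ := IsAlgClosed.exists_pow_nat_eq (2 : K) two_pos
  obtain ⟨a, ha⟩ := IsAlgClosed.exists_pow_nat_eq (2 + 2 * s) two_pos
  exact ⟨a, by linear_combination (a ^ 2 + 2 * s - 2) * ha + 4 * hs⟩

end SolutionsE1

open SolutionsE1 in
theorem solutions_E1_infinite_general (K : Type*) [Field K] [IsAlgClosed K] [NeZero (2 : K)] :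
    (solutionSet K).Infinite := by
  obtain ⟨a, ha⟩ := exists_pow_four_eq K
  exact solutionSet_infinite_of_nonempty ⟨_, mem_solutionSet_of_pow_four_eq ha⟩

/-- The set of solutions `(a,b,c) ∈ ℂ³` of the equations (E1) is infinite. -/
theorem solutions_E1_infinite :
    {p : ℂ × ℂ × ℂ |
      -(1/64) * (-4 + 3*p.1^4 + 8*p.1^3*p.2.1 + 8*p.1^2*p.2.1^2 - 4*p.1^3*p.2.2
          - 8*p.1^2*p.2.1*p.2.2) *
        (4 + 3*p.1^4 + 8*p.1^3*p.2.1 + 8*p.1^2*p.2.1^2 - 4*p.1^3*p.2.2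
          - 8*p.1^2*p.2.1*p.2.2) = 0 ∧
      -(1/8) * p.1^2 * (p.1^4 - 8*p.1^2*p.2.1^2 - 16*p.1*p.2.1^3 - 8*p.2.1^4
        + 8*p.1^2*p.2.1*p.2.2 + 24*p.1*p.2.1^2*p.2.2 + 16*p.2.1^3*p.2.2
        - 2*p.1^2*p.2.2^2 - 8*p.1*p.2.1*p.2.2^2 - 8*p.2.1^2*p.2.2^2) = 0}.Infinite := by
  exact solutions_E1_infinite_general ℂ
end

section
/- Suppose (a,b,c,d) ∈ ℂ⁴ with b ≠ 0 satisfies the equations (E2): a² = 1; b² + 4c/b − c² − 4cd + bc²d + 2bcd² = 0; −2 + 2bc + 2c²/b² − c⁴/4 + 2bd − 2c²d/b + c²d² = 0; −2/b² + 2d/b − d² = 0. Then, setting t = bd, one has t² − 2t + 2 = 0 (so t = 1 ± i), c ≠ 0, (b/c)² = 1 − t, the quotient β = b/c is a primitive 8th root of unity (i.e. β⁴ = −1), and c⁴ − 8βc² + 8β² = 0. -/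
/-!
Put `t = b * d`. The last equation of (E2), multiplied by `-b ^ 2`, is `t ^ 2 - 2 * t + 2 = 0`, that
is, `(1 - t) ^ 2 = -1`. Multiples of this quadratic occur in the second and third equations;
removing them leaves `b ^ 2 = c ^ 2 * (1 - t)` and `c ^ 4 - 8 * b * c + 8 * (1 - t) = 0`. The first
of these says `(b / c) ^ 2 = 1 - t`, whence `(b / c) ^ 4 = (1 - t) ^ 2 = -1`, and in terms of
`b / c` the second is the quartic equation for `c`.
-/

lemma one_sub_sq_eq_neg_one_iff {R : Type*} [CommRing R] {t : R} :
    (1 - t) ^ 2 = -1 ↔ t ^ 2 - 2 * t + 2 = 0 := by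
  rw [← sub_eq_zero]
  ring_nf

lemma eq_one_add_or_eq_one_sub_of_one_sub_sq_eq_neg_one {R : Type*} [CommRing R]
    [NoZeroDivisors R] {i t : R} (hi : i ^ 2 = -1) (ht : (1 - t) ^ 2 = -1) :
    t = 1 + i ∨ t = 1 - i := by
  have h_sq : (t - 1) ^ 2 = i ^ 2 := by rw [hi, ← ht, sub_sq_comm]
  rcases sq_eq_sq_iff_eq_or_eq_neg.mp h_sq with h | h
  · exact .inl (by linear_combination h)
  · exact .inr (by linear_combination h)

section Field

variable {K : Type*} [Field K] {b c d : K}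

lemma E2_fourth_iff_quadratic (hb : b ≠ 0) :
    -2 / b ^ 2 + 2 * d / b - d ^ 2 = 0 ↔ (b * d) ^ 2 - 2 * (b * d) + 2 = 0 := by
  have factor_out : -2 / b ^ 2 + 2 * d / b - d ^ 2 =
      -((b * d) ^ 2 - 2 * (b * d) + 2) / b ^ 2 := by
    field_simp
    ring
  rw [factor_out, div_eq_zero_iff, neg_eq_zero, or_iff_left (pow_ne_zero 2 hb)]

lemma E2_second_iff_sq_eq (hb : b ≠ 0) (ht : (b * d) ^ 2 - 2 * (b * d) + 2 = 0) :
    b ^ 2 + 4 * c / b - c ^ 2 - 4 * c * d + b * c ^ 2 * d + 2 * b * c * d ^ 2 = 0 ↔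
      b ^ 2 = c ^ 2 * (1 - b * d) := by
  have reduce : b ^ 2 + 4 * c / b - c ^ 2 - 4 * c * d + b * c ^ 2 * d + 2 * b * c * d ^ 2 =
      b ^ 2 - c ^ 2 * (1 - b * d) + 2 * c / b * ((b * d) ^ 2 - 2 * (b * d) + 2) := by
    field_simp
    ring
  rw [reduce, ht, mul_zero, add_zero, sub_eq_zero]

lemma E2_third_iff_quartic [NeZero (2 : K)] (hb : b ≠ 0)
    (ht : (b * d) ^ 2 - 2 * (b * d) + 2 = 0) :
    -2 + 2 * b * c + 2 * c ^ 2 / b ^ 2 - c ^ 4 / 4 + 2 * b * d - 2 * c ^ 2 * d / b +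
        c ^ 2 * d ^ 2 = 0 ↔
      c ^ 4 - 8 * b * c + 8 * (1 - b * d) = 0 := by
  have four_ne_zero : (4 : K) ≠ 0 := by
    convert pow_ne_zero 2 (two_ne_zero (α := K)) using 1
    norm_num
  have reduce : -2 + 2 * b * c + 2 * c ^ 2 / b ^ 2 - c ^ 4 / 4 + 2 * b * d - 2 * c ^ 2 * d / b +
        c ^ 2 * d ^ 2 =
      -(c ^ 4 - 8 * b * c + 8 * (1 - b * d)) / 4 +
        c ^ 2 / b ^ 2 * ((b * d) ^ 2 - 2 * (b * d) + 2) := by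
    field_simp
    ring
  rw [reduce, ht, mul_zero, add_zero, div_eq_zero_iff, neg_eq_zero, or_iff_left four_ne_zero]

lemma quartic_div_eq_zero {s : K} (hc : c ≠ 0) (h_div : (b / c) ^ 2 = s)
    (h_quartic : c ^ 4 - 8 * b * c + 8 * s = 0) :
    c ^ 4 - 8 * (b / c) * c ^ 2 + 8 * (b / c) ^ 2 = 0 := by
  have h_mul : b / c * c = b := div_mul_cancel₀ b hc
  linear_combination h_quartic - 8 * c * h_mul + 8 * h_div

theorem solutions_E2_structure_general [NeZero (2 : K)] {i : K} (hi : i ^ 2 = -1) (hb : b ≠ 0)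
    (h2 : b ^ 2 + 4 * c / b - c ^ 2 - 4 * c * d + b * c ^ 2 * d + 2 * b * c * d ^ 2 = 0)
    (h3 : -2 + 2 * b * c + 2 * c ^ 2 / b ^ 2 - c ^ 4 / 4 + 2 * b * d - 2 * c ^ 2 * d / b +
      c ^ 2 * d ^ 2 = 0)
    (h4 : -2 / b ^ 2 + 2 * d / b - d ^ 2 = 0) :
    (b * d) ^ 2 - 2 * (b * d) + 2 = 0 ∧ (b * d = 1 + i ∨ b * d = 1 - i) ∧ c ≠ 0 ∧
      (b / c) ^ 2 = 1 - b * d ∧ (b / c) ^ 4 = -1 ∧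
      c ^ 4 - 8 * (b / c) * c ^ 2 + 8 * (b / c) ^ 2 = 0 := by
  have ht := (E2_fourth_iff_quadratic hb).mp h4
  have h_unit : (1 - b * d) ^ 2 = -1 := one_sub_sq_eq_neg_one_iff.mpr ht
  have h_sq : b ^ 2 = c ^ 2 * (1 - b * d) := (E2_second_iff_sq_eq hb ht).mp h2
  have hc : c ≠ 0 := by
    rintro rfl
    exact hb (by simpa using h_sq)
  have h_div : (b / c) ^ 2 = 1 - b * d := by
    rw [div_pow, h_sq, mul_div_cancel_left₀ _ (pow_ne_zero 2 hc)]
  have h_pow_four : (b / c) ^ 4 = -1 := by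
    rw [← h_unit, ← h_div, ← pow_mul]
  exact ⟨ht, eq_one_add_or_eq_one_sub_of_one_sub_sq_eq_neg_one hi h_unit, hc, h_div, h_pow_four,
    quartic_div_eq_zero hc h_div ((E2_third_iff_quartic hb ht).mp h3)⟩

end Field

open Complex in
/-- For any solution `(a,b,c,d)` of the equations (E2) with `b ≠ 0`, setting
`t = bd` one has `t² − 2t + 2 = 0` (so `t = 1 ± i`), `c ≠ 0`, `(b/c)² = 1 − t`,
`β = b/c` is a primitive 8th root of unity (i.e. `β⁴ = −1`), and
`c⁴ − 8βc² + 8β² = 0`. -/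
theorem solutions_E2_structure (a b c d : ℂ) (hb : b ≠ 0)
    (h1 : a^2 = 1)
    (h2 : b^2 + 4*c/b - c^2 - 4*c*d + b*c^2*d + 2*b*c*d^2 = 0)
    (h3 : -2 + 2*b*c + 2*c^2/b^2 - c^4/4 + 2*b*d - 2*c^2*d/b + c^2*d^2 = 0)
    (h4 : -2/b^2 + 2*d/b - d^2 = 0) :
    (b*d)^2 - 2*(b*d) + 2 = 0 ∧ (b*d = 1 + I ∨ b*d = 1 - I) ∧ c ≠ 0 ∧
    (b/c)^2 = 1 - b*d ∧ (b/c)^4 = -1 ∧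
    c^4 - 8*(b/c)*c^2 + 8*(b/c)^2 = 0 := by
  exact solutions_E2_structure_general I_sq hb h2 h3 h4
end

section
/- Suppose (a,b,c,d) ∈ ℂ⁴ with b ≠ 0 satisfies the equations (E2): a² = 1; b² + 4c/b − c² − 4cd + bc²d + 2bcd² = 0; −2 + 2bc + 2c²/b² − c⁴/4 + 2bd − 2c²d/b + c²d² = 0; −2/b² + 2d/b − d² = 0. Then c is a root of the polynomial f(X) = X¹⁶ + 2176·X⁸ + 4096 (that is, X¹⁶ + 2⁷·17·X⁸ + 2¹²). -/
/-!
Multiplied by `-b²`, the last equation of (E2) says that `j = b * d - 1` is a square root of `-1`.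
Written in terms of `j`, the two middle equations collapse to `b² = -j * c²` and
`8 * b * c = c⁴ - 8 * j`. Squaring the latter eliminates `b` and leaves `c⁸ - 64 = -48 * j * c⁴`,
and squaring once more eliminates `j`: the polynomial is `f(X) = (X⁸ - 64)² + (48 * X⁴)²`.
-/

section Field

variable {K : Type*} [Field K] {b c d : K}

theorem mul_sub_one_sq_eq_neg_one (hb : b ≠ 0) (h : -2 / b ^ 2 + 2 * d / b - d ^ 2 = 0) :
    (b * d - 1) ^ 2 = -1 := by
  field_simp at h
  linear_combination -h

theorem sq_eq_neg_mul_sub_one_mul_sq (hb : b ≠ 0) (hbd : (b * d - 1) ^ 2 = -1)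
    (h : b ^ 2 + 4 * c / b - c ^ 2 - 4 * c * d + b * c ^ 2 * d + 2 * b * c * d ^ 2 = 0) :
    b ^ 2 = -(b * d - 1) * c ^ 2 := by
  have collapse : b ^ 2 + 4 * c / b - c ^ 2 - 4 * c * d + b * c ^ 2 * d + 2 * b * c * d ^ 2
      = b ^ 2 + (b * d - 1) * c ^ 2 + 2 * c / b * ((b * d - 1) ^ 2 + 1) := by
    field_simp
    ring
  linear_combination h - collapse - 2 * c / b * hbd

theorem eight_mul_mul_eq_pow_four_sub [NeZero (2 : K)] (hb : b ≠ 0) (hbd : (b * d - 1) ^ 2 = -1)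
    (h : -2 + 2 * b * c + 2 * c ^ 2 / b ^ 2 - c ^ 4 / 4 + 2 * b * d
      - 2 * c ^ 2 * d / b + c ^ 2 * d ^ 2 = 0) :
    8 * b * c = c ^ 4 - 8 * (b * d - 1) := by
  have four_ne : (4 : K) ≠ 0 := by
    rw [← two_add_two_eq_four, ← two_mul]
    exact mul_self_ne_zero.mpr two_ne_zero
  have collapse : 4 * (-2 + 2 * b * c + 2 * c ^ 2 / b ^ 2 - c ^ 4 / 4 + 2 * b * d
        - 2 * c ^ 2 * d / b + c ^ 2 * d ^ 2)
      = 8 * b * c + 8 * (b * d - 1) - c ^ 4 + 4 * c ^ 2 / b ^ 2 * ((b * d - 1) ^ 2 + 1) := by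
    field_simp
    ring
  linear_combination 4 * h - collapse - 4 * c ^ 2 / b ^ 2 * hbd

end Field

section CommRing

variable {R : Type*} [CommRing R] {b c j : R}

theorem pow_eight_sub_eq_of_sq_eq_neg_one (hj : j ^ 2 = -1) (hb_sq : b ^ 2 = -j * c ^ 2)
    (hbc : 8 * b * c = c ^ 4 - 8 * j) : c ^ 8 - 64 = -48 * j * c ^ 4 := by
  have squared : c ^ 8 - 16 * j * c ^ 4 - 64 = -64 * j * c ^ 4 :=
    calc c ^ 8 - 16 * j * c ^ 4 - 64
        = (c ^ 4 - 8 * j) ^ 2 := by linear_combination -64 * hj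
      _ = (8 * b * c) ^ 2 := by rw [hbc]
      _ = 64 * b ^ 2 * c ^ 2 := by ring
      _ = -64 * j * c ^ 4 := by rw [hb_sq]; ring
  linear_combination squared

theorem pow_sixteen_add_eq_zero_of_sq_eq_neg_one (hj : j ^ 2 = -1)
    (hc : c ^ 8 - 64 = -48 * j * c ^ 4) : c ^ 16 + 2176 * c ^ 8 + 4096 = 0 :=
  calc c ^ 16 + 2176 * c ^ 8 + 4096
      = (c ^ 8 - 64) ^ 2 + (48 * c ^ 4) ^ 2 := by ring
    _ = (j ^ 2 + 1) * (48 * c ^ 4) ^ 2 := by rw [hc]; ring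
    _ = 0 := by rw [hj, neg_add_cancel, zero_mul]

end CommRing

theorem c_root_of_f_general {K : Type*} [Field K] [NeZero (2 : K)] (b c d : K) (hb : b ≠ 0)
    (h2 : b ^ 2 + 4 * c / b - c ^ 2 - 4 * c * d + b * c ^ 2 * d + 2 * b * c * d ^ 2 = 0)
    (h3 : -2 + 2 * b * c + 2 * c ^ 2 / b ^ 2 - c ^ 4 / 4 + 2 * b * d
      - 2 * c ^ 2 * d / b + c ^ 2 * d ^ 2 = 0)
    (h4 : -2 / b ^ 2 + 2 * d / b - d ^ 2 = 0) :
    c ^ 16 + 2176 * c ^ 8 + 4096 = 0 := by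
  have hj : (b * d - 1) ^ 2 = -1 := mul_sub_one_sq_eq_neg_one hb h4
  have hb_sq : b ^ 2 = -(b * d - 1) * c ^ 2 := sq_eq_neg_mul_sub_one_mul_sq hb hj h2
  have hbc : 8 * b * c = c ^ 4 - 8 * (b * d - 1) := eight_mul_mul_eq_pow_four_sub hb hj h3
  exact pow_sixteen_add_eq_zero_of_sq_eq_neg_one hj
    (pow_eight_sub_eq_of_sq_eq_neg_one hj hb_sq hbc)

/-- For any solution `(a,b,c,d)` of the equations (E2) with `b ≠ 0`, the value `c`
is a root of `f(X) = X¹⁶ + 2⁷·17·X⁸ + 2¹² = X¹⁶ + 2176·X⁸ + 4096`. -/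
theorem c_root_of_f (a b c d : ℂ) (hb : b ≠ 0)
    (h1 : a^2 = 1)
    (h2 : b^2 + 4*c/b - c^2 - 4*c*d + b*c^2*d + 2*b*c*d^2 = 0)
    (h3 : -2 + 2*b*c + 2*c^2/b^2 - c^4/4 + 2*b*d - 2*c^2*d/b + c^2*d^2 = 0)
    (h4 : -2/b^2 + 2*d/b - d^2 = 0) :
    c^16 + 2176*c^8 + 4096 = 0 :=
  c_root_of_f_general b c d hb h2 h3 h4
end

section
/- The set of quadruples (a,b,c,d) ∈ ℂ⁴ with b ≠ 0 satisfying the equations (E2): a² = 1; b² + 4c/b − c² − 4cd + bc²d + 2bcd² = 0; −2 + 2bc + 2c²/b² − c⁴/4 + 2bd − 2c²d/b + c²d² = 0; −2/b² + 2d/b − d² = 0, has exactly 32 elements. -/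
/-!
Put `j = bd - 1`. The last equation of (E2) says `j² = -1`, and modulo it the other two equations
involving `b` become `b² = -jc²` and `8bc = c⁴ - 8j`. Squaring the latter eliminates `b` and leaves
`c⁸ + 48jc⁴ = 64`, which is linear in `j`; hence `c` determines `j`, `b` and `d`, and substituting
into `j² = -1` shows that `c` is a root of `X¹⁶ + 2176X⁸ + 4096`. Outside characteristics `2` and
`3` this polynomial is separable, because `U² + 2176U + 4096` has discriminant `2¹⁹ · 3²` and
constant term `2¹²`. Each of its `16` roots is combined with the two values `a = ±1`.
-/

open Polynomial

section Separability

variable {R : Type*} [CommRing R]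

theorem isCoprime_X_of_isUnit_coeff_zero {f : R[X]} (hf : IsUnit (f.coeff 0)) :
    IsCoprime f X := by
  rw [← divX_mul_X_add f, add_comm, IsCoprime.add_mul_right_left_iff]
  exact isCoprime_one_left.of_isCoprime_of_dvd_left (hf.map C).dvd

theorem separable_expand {n : ℕ} {f : R[X]} (hn : IsUnit (n : R)) (hf₀ : IsUnit (f.coeff 0))
    (hf : f.Separable) : (expand R n f).Separable := by
  have hX : IsCoprime (expand R n f) X := by
    apply isCoprime_X_of_isUnit_coeff_zero
    rcases n.eq_zero_or_pos with rfl | hn₀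
    · have : Subsingleton R := subsingleton_of_zero_eq_one (by simpa using hn)
      exact isUnit_of_subsingleton _
    · simpa [coeff_expand hn₀] using hf₀
  have hn' : IsUnit (n : R[X]) := by simpa using hn.map (C : R →+* R[X])
  rw [separable_def, derivative_expand]
  exact (IsCoprime.map hf (expand R n).toRingHom).mul_right
    (isCoprime_mul_unit_left_right hn' _ _ |>.2 hX.pow_right)

theorem separable_quadratic_of_isUnit_discrim {a b c : R} (h : IsUnit (discrim a b c)) :
    (C a * X ^ 2 + C b * X + C c).Separable := by
  obtain ⟨u, hu⟩ := h.exists_left_inv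
  -- `f'² - 4af = b² - 4ac`
  have bezout : -(4 * C a) * (C a * X ^ 2 + C b * X + C c) + (2 * C a * X + C b) *
      (2 * C a * X + C b) = C (discrim a b c) := by
    simp only [discrim, C_sub, C_mul, C_pow, C_ofNat]
    ring
  have derivative_eq : derivative (C a * X ^ 2 + C b * X + C c) = 2 * C a * X + C b := by
    simp only [derivative_add, derivative_C_mul_X_sq, derivative_C_mul_X, derivative_C, C_mul,
      C_ofNat, add_zero]
    ring
  refine ⟨C u * -(4 * C a), C u * (2 * C a * X + C b), ?_⟩
  rw [derivative_eq, mul_assoc, mul_assoc, ← mul_add, bezout, ← C_mul, hu, C_1]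

end Separability

theorem ncard_rootSet_eq_natDegree {F K : Type*} [Field F] [Field K] [Algebra F K] {p : F[X]}
    (hsep : p.Separable) (hsplit : (p.map (algebraMap F K)).Splits) :
    (p.rootSet K).ncard = p.natDegree := by
  rw [Set.ncard_eq_toFinset_card', Set.toFinset_card, card_rootSet_eq_natDegree hsep hsplit]

theorem ncard_sq_eq_one {R : Type*} [Ring R] [NoZeroDivisors R] (h₂ : (2 : R) ≠ 0) :
    {a : R | a ^ 2 = 1}.ncard = 2 := by
  have : {a : R | a ^ 2 = 1} = {1, -1} := by
    ext a
    simp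
  rw [this, Set.ncard_pair]
  rwa [Ne, ← add_eq_zero_iff_eq_neg, one_add_one_eq_two]

/-- The polynomial `X¹⁶ + 2176X⁸ + 4096` whose roots are the values of `c` in the solutions of (E2),
encoded as a quadratic in `X⁸`. -/
noncomputable def eliminantE2 (R : Type*) [CommRing R] : R[X] :=
  expand R 8 (C 1 * X ^ 2 + C 2176 * X + C 4096)

theorem natDegree_eliminantE2 {R : Type*} [CommRing R] [Nontrivial R] :
    (eliminantE2 R).natDegree = 16 := by
  rw [eliminantE2, natDegree_expand, natDegree_quadratic one_ne_zero]

/-- The system that the equations of (E2) for `b, c, d` become in the variables `j = bd - 1`, `b`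
and `c`. -/
structure ReducedE2 {R : Type*} [CommRing R] (j b c : R) : Prop where
  sq_eq_neg_one : j ^ 2 = -1
  b_sq : b ^ 2 = -j * c ^ 2
  b_mul_c : 8 * (b * c) = c ^ 4 - 8 * j

namespace ReducedE2

variable {R : Type*} [CommRing R] {j b c : R}

theorem c_pow_eight (h : ReducedE2 j b c) : c ^ 8 + 48 * j * c ^ 4 = 64 := by
  linear_combination -(8 * (b * c) + (c ^ 4 - 8 * j)) * h.b_mul_c + 64 * c ^ 2 * h.b_sq
    - 64 * h.sq_eq_neg_one

theorem c_root (h : ReducedE2 j b c) : c ^ 16 + 2176 * c ^ 8 + 4096 = 0 := by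
  linear_combination (c ^ 8 - 48 * j * c ^ 4 - 64) * h.c_pow_eight
    + 2304 * c ^ 8 * h.sq_eq_neg_one

end ReducedE2

section Domain

variable {R : Type*} [CommRing R] [IsDomain R] {j b c : R}

theorem eight_ne_zero_of_two_ne_zero (h₂ : (2 : R) ≠ 0) : (8 : R) ≠ 0 := by
  convert pow_ne_zero 3 h₂
  norm_num

theorem forty_eight_ne_zero_of_two_ne_zero (h₂ : (2 : R) ≠ 0) (h₃ : (3 : R) ≠ 0) :
    (48 : R) ≠ 0 := by
  convert mul_ne_zero (pow_ne_zero 4 h₂) h₃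
  norm_num

theorem mem_rootSet_eliminantE2 :
    c ∈ (eliminantE2 R).rootSet R ↔ c ^ 16 + 2176 * c ^ 8 + 4096 = 0 := by
  have hne : eliminantE2 R ≠ 0 := ne_zero_of_natDegree_gt (n := 0) (by simp [natDegree_eliminantE2])
  rw [mem_rootSet_of_ne hne, eliminantE2, expand_aeval]
  simp [← pow_mul]

theorem c_ne_zero_of_root (h₂ : (2 : R) ≠ 0) (hc : c ^ 16 + 2176 * c ^ 8 + 4096 = 0) :
    c ≠ 0 := by
  rintro rfl
  exact pow_ne_zero 12 h₂ (by linear_combination hc)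

theorem ReducedE2.b_ne_zero (h₂ : (2 : R) ≠ 0) (h : ReducedE2 j b c) : b ≠ 0 := by
  rintro rfl
  have hc := c_ne_zero_of_root h₂ h.c_root
  have hj : j = 0 := by simpa [hc] using h.b_sq
  simpa [hj] using h.sq_eq_neg_one

end Domain

section Field

variable {K : Type*} [Field K]

theorem separable_eliminantE2 (h₂ : (2 : K) ≠ 0) (h₃ : (3 : K) ≠ 0) :
    (eliminantE2 K).Separable := by
  have hcoeff : (C 1 * X ^ 2 + C 2176 * X + C 4096 : K[X]).coeff 0 = 2 ^ 12 := by
    rw [coeff_zero_eq_eval_zero]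
    norm_num
  have hdiscrim : discrim (1 : K) 2176 4096 = 2 ^ 19 * 3 ^ 2 := by norm_num [discrim]
  refine separable_expand ?_ ?_ (separable_quadratic_of_isUnit_discrim ?_)
  · exact_mod_cast (eight_ne_zero_of_two_ne_zero h₂).isUnit
  · simpa only [hcoeff] using (pow_ne_zero 12 h₂).isUnit
  · simpa only [hdiscrim] using (mul_ne_zero (pow_ne_zero 19 h₂) (pow_ne_zero 2 h₃)).isUnit

theorem ncard_rootSet_eliminantE2 [IsSepClosed K] (h₂ : (2 : K) ≠ 0) (h₃ : (3 : K) ≠ 0) :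
    ((eliminantE2 K).rootSet K).ncard = 16 := by
  have hsep := separable_eliminantE2 h₂ h₃
  rw [ncard_rootSet_eq_natDegree hsep (IsSepClosed.splits_of_separable _ hsep.map),
    natDegree_eliminantE2]

variable {j b c d : K}

theorem e2_second_lhs_eq (hb : b ≠ 0) (hj : (b * d - 1) ^ 2 = -1) :
    b ^ 2 + 4 * c / b - c ^ 2 - 4 * c * d + b * c ^ 2 * d + 2 * b * c * d ^ 2 =
      b ^ 2 + (b * d - 1) * c ^ 2 := by
  field_simp
  linear_combination 2 * c * hj

theorem e2_third_lhs_eq (h₄ : (4 : K) ≠ 0) (hb : b ≠ 0) (hj : (b * d - 1) ^ 2 = -1) :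
    -2 + 2 * b * c + 2 * c ^ 2 / b ^ 2 - c ^ 4 / 4 + 2 * b * d - 2 * c ^ 2 * d / b
      + c ^ 2 * d ^ 2 = (8 * (b * c) - (c ^ 4 - 8 * (b * d - 1))) / 4 := by
  field_simp
  linear_combination 4 * c ^ 2 * hj

theorem e2_fourth_lhs_eq (hb : b ≠ 0) :
    -2 / b ^ 2 + 2 * d / b - d ^ 2 = -((b * d - 1) ^ 2 + 1) / b ^ 2 := by
  field_simp
  ring

theorem e2_iff_reducedE2 (h₄ : (4 : K) ≠ 0) (hb : b ≠ 0) :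
    (b ^ 2 + 4 * c / b - c ^ 2 - 4 * c * d + b * c ^ 2 * d + 2 * b * c * d ^ 2 = 0 ∧
      -2 + 2 * b * c + 2 * c ^ 2 / b ^ 2 - c ^ 4 / 4 + 2 * b * d - 2 * c ^ 2 * d / b
        + c ^ 2 * d ^ 2 = 0 ∧
      -2 / b ^ 2 + 2 * d / b - d ^ 2 = 0) ↔ ReducedE2 (b * d - 1) b c := by
  have fourth_iff : -2 / b ^ 2 + 2 * d / b - d ^ 2 = 0 ↔ (b * d - 1) ^ 2 = -1 := by
    rw [e2_fourth_lhs_eq hb, div_eq_zero_iff, neg_eq_zero, or_iff_left (pow_ne_zero 2 hb),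
      add_eq_zero_iff_eq_neg]
  constructor
  · rintro ⟨second, third, fourth⟩
    have hj := fourth_iff.1 fourth
    rw [e2_second_lhs_eq hb hj] at second
    rw [e2_third_lhs_eq h₄ hb hj, div_eq_zero_iff, or_iff_left h₄] at third
    exact ⟨hj, by linear_combination second, sub_eq_zero.1 third⟩
  · rintro ⟨hj, b_sq, b_mul_c⟩
    refine ⟨?_, ?_, fourth_iff.2 hj⟩
    · rw [e2_second_lhs_eq hb hj, b_sq]
      ring
    · rw [e2_third_lhs_eq h₄ hb hj, b_mul_c, sub_self, zero_div]

/-- The value of `j = bd - 1` in a solution of (E2), obtained by solving `c⁸ + 48jc⁴ = 64`. -/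
def jOfRoot (c : K) : K := (64 - c ^ 8) / (48 * c ^ 4)

/-- The value of `b` in a solution of (E2), obtained by solving `8bc = c⁴ - 8j`. -/
def bOfRoot (c : K) : K := (c ^ 4 - 8 * jOfRoot c) / (8 * c)

/-- The triple `(b, c, d)` solving (E2) that a root `c` of the eliminant determines. -/
def solutionOfRoot (c : K) : K × K × K := (bOfRoot c, c, (1 + jOfRoot c) / bOfRoot c)

theorem solutionOfRoot_injective : Function.Injective (solutionOfRoot : K → K × K × K) :=
  fun _ _ h ↦ congrArg (·.2.1) h

theorem reducedE2_ofRoot (h₂ : (2 : K) ≠ 0) (h₃ : (3 : K) ≠ 0)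
    (hc : c ^ 16 + 2176 * c ^ 8 + 4096 = 0) : ReducedE2 (jOfRoot c) (bOfRoot c) c := by
  have hc₀ := c_ne_zero_of_root h₂ hc
  have h₈ := eight_ne_zero_of_two_ne_zero h₂
  have h₄₈ := forty_eight_ne_zero_of_two_ne_zero h₂ h₃
  have j_sq : jOfRoot c ^ 2 = -1 := by
    rw [jOfRoot]
    field_simp
    linear_combination hc
  have c_pow_eight : c ^ 8 + 48 * jOfRoot c * c ^ 4 = 64 := by
    rw [jOfRoot]
    field_simp
    ring
  have b_mul_c : 8 * (bOfRoot c * c) = c ^ 4 - 8 * jOfRoot c := by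
    rw [bOfRoot]
    field_simp
  refine ⟨j_sq, ?_, b_mul_c⟩
  apply mul_left_cancel₀ (mul_ne_zero (pow_ne_zero 2 h₈) (pow_ne_zero 2 hc₀))
  linear_combination (8 * (bOfRoot c * c) + (c ^ 4 - 8 * jOfRoot c)) * b_mul_c + c_pow_eight
    + 64 * j_sq

theorem reducedE2_iff (h₂ : (2 : K) ≠ 0) (h₃ : (3 : K) ≠ 0) :
    ReducedE2 j b c ↔
      c ^ 16 + 2176 * c ^ 8 + 4096 = 0 ∧ j = jOfRoot c ∧ b = bOfRoot c := by
  refine ⟨fun h ↦ ?_, fun ⟨hc, hj, hb⟩ ↦ hj ▸ hb ▸ reducedE2_ofRoot h₂ h₃ hc⟩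
  have h₀ := reducedE2_ofRoot h₂ h₃ h.c_root
  have hc₀ := c_ne_zero_of_root h₂ h.c_root
  have h₈ := eight_ne_zero_of_two_ne_zero h₂
  have h₄₈ := forty_eight_ne_zero_of_two_ne_zero h₂ h₃
  have hj : j = jOfRoot c := by
    apply mul_left_cancel₀ (mul_ne_zero h₄₈ (pow_ne_zero 4 hc₀))
    linear_combination h.c_pow_eight - h₀.c_pow_eight
  refine ⟨h.c_root, hj, mul_left_cancel₀ (mul_ne_zero h₈ hc₀) ?_⟩
  linear_combination h.b_mul_c - h₀.b_mul_c - 8 * hj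

theorem mem_image_solutionOfRoot (h₂ : (2 : K) ≠ 0) (h₃ : (3 : K) ≠ 0) :
    (b, c, d) ∈ solutionOfRoot '' (eliminantE2 K).rootSet K ↔
      b ≠ 0 ∧ ReducedE2 (b * d - 1) b c := by
  constructor
  · rintro ⟨c, hc, ⟨⟩⟩
    have h := reducedE2_ofRoot h₂ h₃ (mem_rootSet_eliminantE2.1 hc)
    have hb := h.b_ne_zero h₂
    refine ⟨hb, ?_⟩
    rwa [mul_div_cancel₀ _ hb, add_sub_cancel_left]
  · rintro ⟨hb, h⟩
    obtain ⟨hc, hj, hb'⟩ := (reducedE2_iff h₂ h₃).1 h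
    refine ⟨c, mem_rootSet_eliminantE2.2 hc, ?_⟩
    rw [solutionOfRoot, ← hj, ← hb', add_sub_cancel, mul_div_cancel_left₀ d hb]

theorem solutions_E2_card_general [IsSepClosed K] (h₂ : (2 : K) ≠ 0) (h₃ : (3 : K) ≠ 0) :
    Set.ncard {p : K × K × K × K | p.2.1 ≠ 0 ∧
      p.1^2 = 1 ∧
      p.2.1^2 + 4*p.2.2.1/p.2.1 - p.2.2.1^2 - 4*p.2.2.1*p.2.2.2
        + p.2.1*p.2.2.1^2*p.2.2.2 + 2*p.2.1*p.2.2.1*p.2.2.2^2 = 0 ∧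
      -2 + 2*p.2.1*p.2.2.1 + 2*p.2.2.1^2/p.2.1^2 - p.2.2.1^4/4 + 2*p.2.1*p.2.2.2
        - 2*p.2.2.1^2*p.2.2.2/p.2.1 + p.2.2.1^2*p.2.2.2^2 = 0 ∧
      -2/p.2.1^2 + 2*p.2.2.2/p.2.1 - p.2.2.2^2 = 0} = 32 := by
  calc
    _ = ({a : K | a ^ 2 = 1} ×ˢ (solutionOfRoot '' (eliminantE2 K).rootSet K)).ncard := by
      congr 1
      ext ⟨a, b, c, d⟩
      have h₄ : (4 : K) ≠ 0 := by
        convert pow_ne_zero 2 h₂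
        norm_num
      rw [Set.mem_prod, mem_image_solutionOfRoot h₂ h₃, Set.mem_ofPred_eq, Set.mem_ofPred_eq,
        and_left_comm]
      exact and_congr_right fun _ ↦ and_congr_right fun hb ↦ e2_iff_reducedE2 h₄ hb
    _ = 2 * 16 := by
      rw [Set.ncard_prod, ncard_sq_eq_one h₂,
        Set.ncard_image_of_injective _ solutionOfRoot_injective, ncard_rootSet_eliminantE2 h₂ h₃]
    _ = 32 := rfl

end Field

/-- The equations (E2) admit precisely 32 solutions `(a,b,c,d) ∈ ℂ⁴` with `b ≠ 0`. -/
theorem solutions_E2_card :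
    Set.ncard {p : ℂ × ℂ × ℂ × ℂ | p.2.1 ≠ 0 ∧
      p.1^2 = 1 ∧
      p.2.1^2 + 4*p.2.2.1/p.2.1 - p.2.2.1^2 - 4*p.2.2.1*p.2.2.2
        + p.2.1*p.2.2.1^2*p.2.2.2 + 2*p.2.1*p.2.2.1*p.2.2.2^2 = 0 ∧
      -2 + 2*p.2.1*p.2.2.1 + 2*p.2.2.1^2/p.2.1^2 - p.2.2.1^4/4 + 2*p.2.1*p.2.2.2
        - 2*p.2.2.1^2*p.2.2.2/p.2.1 + p.2.2.1^2*p.2.2.2^2 = 0 ∧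
      -2/p.2.1^2 + 2*p.2.2.2/p.2.1 - p.2.2.2^2 = 0} = 32 :=
  solutions_E2_card_general two_ne_zero three_ne_zero
end

section
/- For every integer n ≥ 1, one has 1 + 2·∑_{k=2}^{n} P₁(k) + ∑_{k=4}^{n} ∑_{i=2}^{k−2} P₁(i)·P₁(k−i) = ∑_{k=0}^{n} P(n−k)·(P(k) − P(k−1)), where P₁(k) = P(k) − P(k−1); here P(0) := 1 and P(−1) := 0. (Both sides equal the number Inv(n) of invertible potentials in n variables.) -/
/-- The partition-counting function extended to `ℤ` by `P(k) = 0` for `k < 0`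
(so in particular `P(0) = 1` and `P(−1) = 0`). -/
noncomputable def Pz (k : ℤ) : ℤ :=
  if k < 0 then 0 else Fintype.card (Nat.Partition k.toNat)

/-- `P₁(k) = P(k) − P(k−1)`, the number of partitions of `k` into parts of size
at least 2. -/
noncomputable def P₁z (k : ℤ) : ℤ := Pz k - Pz (k - 1)

/-!
Put `P(x) = ∑ P(n) xⁿ` and `P₁(x) = (1 - x) P(x)`. The right-hand side is the coefficient of `xⁿ` in
`P(x) P₁(x) = P₁(x)² / (1 - x)`, that is, the sum of the first `n + 1` coefficients of `P₁(x)²`.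
Since `P₁(0) = 1` and `P₁(1) = 0`, the terms of the coefficient of `xᵏ` in `P₁(x)²` with `i = 0`
and `i = k` contribute `2 P₁(k)` for `k ≥ 2`, those with `i = 1` and `i = k - 1` vanish, and the
others form the inner sum on the left.
-/

open Finset

theorem Pz_neg_one : Pz (-1) = 0 := by simp [Pz]

theorem Pz_zero : Pz 0 = 1 := by simp [Pz]

theorem Pz_one : Pz 1 = 1 := by simp [Pz]

theorem sum_range_sub_pred {G : Type*} [AddCommGroup G] (p : ℤ → G) (n : ℕ) :
    ∑ j ∈ range n, (p j - p (j - 1)) = p (n - 1) - p (-1) := by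
  simpa using sum_range_sub (fun j : ℕ ↦ p (j - 1)) n

theorem sum_range_succ_eq_add_sum_Icc_two {M : Type*} [AddCommMonoid M] {c : ℕ → M}
    (hc : c 1 = 0) (n : ℕ) : ∑ m ∈ range (n + 1), c m = c 0 + ∑ m ∈ Icc 2 n, c m := by
  rw [sum_range_eq_add_Ico c n.succ_pos]
  congr 1
  symm
  refine sum_subset (fun m hm ↦ by simp only [mem_Icc, mem_Ico] at hm ⊢; omega) fun m hm hm' ↦ ?_
  obtain rfl : m = 1 := by simp only [mem_Icc, mem_Ico] at hm hm'; omega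
  exact hc

theorem sum_range_sum_range_mul {R : Type*} [NonUnitalNonAssocSemiring R] (a b : ℕ → R) (n : ℕ) :
    ∑ k ∈ range n, (∑ j ∈ range (n - k), a j) * b k =
      ∑ m ∈ range n, ∑ ij ∈ antidiagonal m, a ij.1 * b ij.2 := by
  simp_rw [sum_mul]
  rw [← sum_range_diag_flip n fun k j ↦ a j * b k]
  refine sum_congr rfl fun m _ ↦ ?_
  rw [← Nat.sum_antidiagonal_swap]
  exact (Nat.sum_antidiagonal_eq_sum_range_succ (fun k j ↦ a j * b k) m).symm

section NonAssocSemiring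

variable {R : Type*} [NonAssocSemiring R]

theorem sum_antidiagonal_mul_eq_add_sum_Icc {a b : ℕ → R} (ha₀ : a 0 = 1) (ha₁ : a 1 = 0)
    (hb₀ : b 0 = 1) (hb₁ : b 1 = 0) {m : ℕ} (hm : m ≠ 0) :
    ∑ ij ∈ antidiagonal m, a ij.1 * b ij.2 =
      a m + b m + ∑ i ∈ Icc 2 (m - 2), a i * b (m - i) := by
  have inner : ∑ i ∈ Icc 2 (m - 2), a i * b (m - i) = ∑ i ∈ Ico 1 m, a i * b (m - i) := by
    refine sum_subset (fun i hi ↦ by simp only [mem_Icc, mem_Ico] at hi ⊢; omega)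
      fun i hi hi' ↦ ?_
    obtain rfl | hi : i = 1 ∨ m - i = 1 := by
      simp only [mem_Icc, mem_Ico] at hi hi'; omega
    · rw [ha₁, zero_mul]
    · rw [hi, hb₁, mul_zero]
  rw [Nat.sum_antidiagonal_eq_sum_range_succ (fun i j ↦ a i * b j), sum_range_succ,
    sum_range_eq_add_Ico _ (by omega), inner, Nat.sub_zero, Nat.sub_self, ha₀, hb₀, one_mul,
    mul_one]
  abel

theorem sum_range_sum_antidiagonal_mul_self {a : ℕ → R} (h₀ : a 0 = 1) (h₁ : a 1 = 0) (n : ℕ) :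
    ∑ m ∈ range (n + 1), ∑ ij ∈ antidiagonal m, a ij.1 * a ij.2 =
      1 + 2 * ∑ k ∈ Icc 2 n, a k + ∑ k ∈ Icc 4 n, ∑ i ∈ Icc 2 (k - 2), a i * a (k - i) := by
  have inner : ∑ k ∈ Icc 4 n, ∑ i ∈ Icc 2 (k - 2), a i * a (k - i) =
      ∑ k ∈ Icc 2 n, ∑ i ∈ Icc 2 (k - 2), a i * a (k - i) := by
    refine sum_subset (Icc_subset_Icc_left (by omega)) fun k hk hk' ↦ ?_
    rw [Icc_eq_empty (by simp only [mem_Icc] at hk hk'; omega), sum_empty]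
  rw [sum_range_succ_eq_add_sum_Icc_two (by simp [Nat.antidiagonal_succ, h₁]), inner, add_assoc,
    mul_sum, ← sum_add_distrib]
  congr 1
  · simp [h₀]
  · refine sum_congr rfl fun k hk ↦ ?_
    have hk₀ : k ≠ 0 := by simp only [mem_Icc] at hk; omega
    rw [sum_antidiagonal_mul_eq_add_sum_Icc h₀ h₁ h₀ h₁ hk₀, two_mul]

end NonAssocSemiring

theorem inv_formulas_agree_general {R : Type*} [NonAssocRing R] {p q : ℤ → R}
    (hq : ∀ k, q k = p k - p (k - 1)) (hp_neg : p (-1) = 0) (hp₀ : p 0 = 1) (hp₁ : p 1 = 1)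
    (n : ℕ) :
    1 + 2 * (∑ k ∈ Icc 2 n, q k) +
      ∑ k ∈ Icc 4 n, ∑ i ∈ Icc 2 (k - 2), q i * q ((k : ℤ) - i) =
    ∑ k ∈ range (n + 1), p ((n : ℤ) - k) * (p k - p ((k : ℤ) - 1)) := by
  have hq₀ : q (0 : ℕ) = 1 := by simp [hq, hp_neg, hp₀]
  have hq₁ : q (1 : ℕ) = 0 := by simp [hq, hp₀, hp₁]
  have p_eq_sum_q {k : ℕ} (hk : k ∈ range (n + 1)) :
      p ((n : ℤ) - k) = ∑ j ∈ range (n + 1 - k), q j := by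
    simp_rw [hq]
    rw [sum_range_sub_pred, hp_neg, sub_zero, Nat.cast_sub (mem_range.mp hk).le]
    congr 1
    push_cast
    ring
  calc
    _ = 1 + 2 * (∑ k ∈ Icc 2 n, q k) +
          ∑ k ∈ Icc 4 n, ∑ i ∈ Icc 2 (k - 2), q i * q (k - i : ℕ) := by
      congr 1
      refine sum_congr rfl fun k _ ↦ sum_congr rfl fun i hi ↦ ?_
      rw [Nat.cast_sub (by simp only [mem_Icc] at hi; omega)]
    _ = ∑ m ∈ range (n + 1), ∑ ij ∈ antidiagonal m, q ij.1 * q ij.2 :=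
      (sum_range_sum_antidiagonal_mul_self (a := fun k ↦ q k) hq₀ hq₁ n).symm
    _ = ∑ k ∈ range (n + 1), (∑ j ∈ range (n + 1 - k), q j) * q k :=
      (sum_range_sum_range_mul (fun k ↦ q k) (fun k ↦ q k) (n + 1)).symm
    _ = _ := sum_congr rfl fun k hk ↦ by rw [p_eq_sum_q hk, hq k]

/-- For every `n ≥ 1`,
`1 + 2·∑_{k=2}^{n} P₁(k) + ∑_{k=4}^{n} ∑_{i=2}^{k−2} P₁(i)·P₁(k−i)
  = ∑_{k=0}^{n} P(n−k)·(P(k) − P(k−1))`;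
both sides equal the number `Inv(n)` of invertible potentials in `n` variables. -/
theorem inv_formulas_agree (n : ℕ) (hn : 1 ≤ n) :
    1 + 2 * (∑ k ∈ Finset.Icc 2 n, P₁z k) +
      ∑ k ∈ Finset.Icc 4 n, ∑ i ∈ Finset.Icc 2 (k - 2), P₁z i * P₁z ((k : ℤ) - i) =
    ∑ k ∈ Finset.range (n + 1), Pz ((n : ℤ) - k) * (Pz k - Pz ((k : ℤ) - 1)) :=
  inv_formulas_agree_general (fun _ ↦ rfl) Pz_neg_one Pz_zero Pz_one n
end
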